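/- Let (ΛZ,D) be an elliptic Sullivan algebra over Q with Z = Z_0 ⊕ Z_1, where D vanishes on Z_0, Z_1 is concentrated in odd degrees, and D maps a basis of Z_1 onto a regular sequence a_1,…,a_k in ΛZ_0. Then k = dim Z_0^even, and the images ā_1,…,ā_k of the a_i under the projection ΛZ_0 → ΛZ_0^even (sending Z_0^odd to 0) form a regular sequence in the polynomial algebra ΛZ_0^even. -/

import Mathlib

/-!
Commutative differential graded algebras over `ℚ`, (minimal) Sullivan algebras,
ellipticity and formality; cf. Amann–Zoller, "On the toral rank conjecture and
some consequences of new variants of formality".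
-/

/-- A non-negatively graded commutative (in the graded sense) differential
graded algebra over `ℚ`. -/
structure CDGA : Type 1 where
  carrier : Type
  [ringStr : Ring carrier]
  [algStr : Algebra ℚ carrier]
  /-- The grading, by `ℚ`-subspaces. -/
  grading : ℤ → Submodule ℚ carrier
  /-- The grading is an internal direct sum decomposition. -/
  internal : DirectSum.IsInternal grading
  one_mem : (1 : carrier) ∈ grading 0
  mul_mem : ∀ {i j : ℤ} {a b : carrier}, a ∈ grading i → b ∈ grading j → a * b ∈ grading (i + j)
  /-- Graded commutativity (Koszul signs). -/
  gcomm : ∀ {i j : ℤ} {a b : carrier}, a ∈ grading i → b ∈ grading j →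
      a * b = ((-1 : ℚ) ^ (i * j)) • (b * a)
  /-- Non-negative grading. -/
  nonneg : ∀ i : ℤ, i < 0 → grading i = ⊥
  /-- The differential. -/
  d : carrier →ₗ[ℚ] carrier
  d_mem : ∀ {i : ℤ} {a : carrier}, a ∈ grading i → d a ∈ grading (i + 1)
  d_sq : ∀ a : carrier, d (d a) = 0
  /-- Graded Leibniz rule. -/
  leibniz : ∀ {i : ℤ} {a : carrier}, a ∈ grading i → ∀ b : carrier,
      d (a * b) = d a * b + ((-1 : ℚ) ^ i) • (a * d b)

attribute [instance] CDGA.ringStr CDGA.algStr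

/-- The cohomology of a cdga, as a `ℚ`-vector space. -/
abbrev CDGA.Hspace (A : CDGA) : Type :=
  ↥(LinearMap.ker A.d) ⧸ ((LinearMap.range A.d).comap (LinearMap.ker A.d).subtype)

/-- The degree-`n` cocycles of a cdga, inside the cocycle subspace. -/
def CDGA.cocyclesAt (A : CDGA) (n : ℤ) : Submodule ℚ ↥(LinearMap.ker A.d) :=
  (A.grading n).comap (LinearMap.ker A.d).subtype

/-- The degree-`n` part of the cohomology of a cdga. -/
def CDGA.Hpiece (A : CDGA) (n : ℤ) : Submodule ℚ A.Hspace :=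
  (A.cocyclesAt n).map ((LinearMap.range A.d).comap (LinearMap.ker A.d).subtype).mkQ

/-- A morphism of cdgas: a degree-preserving algebra map commuting with the
differentials. -/
structure CDGAHom (A B : CDGA) where
  toFun : A.carrier →ₐ[ℚ] B.carrier
  map_grading : ∀ i : ℤ, ∀ x ∈ A.grading i, toFun x ∈ B.grading i
  comm_d : ∀ x : A.carrier, toFun (A.d x) = B.d (toFun x)

/-- A morphism of cdgas is a quasi-isomorphism if it induces a bijection on
cohomology. -/
def CDGAHom.IsQuasiIso {A B : CDGA} (f : CDGAHom A B) : Prop :=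
  (∀ x : A.carrier, A.d x = 0 → f.toFun x ∈ LinearMap.range B.d →
      x ∈ LinearMap.range A.d) ∧
  (∀ y : B.carrier, B.d y = 0 → ∃ x : A.carrier, A.d x = 0 ∧
      f.toFun x - y ∈ LinearMap.range B.d)

/-- Two cdgas are connected by a chain (zigzag) of cdga quasi-isomorphisms. -/
def CDGAConnected (A B : CDGA) : Prop :=
  Relation.EqvGen (fun X Y : CDGA => ∃ f : CDGAHom X Y, f.IsQuasiIso) A B

/-- A cdga is formal if it is connected to its cohomology algebra, equipped
with the zero differential, by a chain of cdga quasi-isomorphisms; equivalently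
(as stated here), it is connected by a chain of cdga quasi-isomorphisms to a
cdga with zero differential. -/
def CDGA.IsFormal (A : CDGA) : Prop :=
  ∃ B : CDGA, B.d = 0 ∧ CDGAConnected A B

/-- The monomial `∏ g x ^ e x` associated with a finitely supported exponent
function `e`, the product being taken in increasing order of the (linearly
ordered) index set. -/
def monomialIn {A : Type} [Ring A] {ι : Type} (lo : LinearOrder ι)
    (g : ι → A) (e : ι →₀ ℕ) : A :=
  letI := lo
  ((e.support.sort (· ≤ ·)).map fun x => g x ^ e x).prod

/-- A Sullivan algebra `(ΛV, d)`: the free graded-commutative algebra on a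
simply connected graded vector space `V = V^{≥2}` of finite type.  Freeness is
expressed by the requirement that the admissible monomials (square-free in the
odd-degree generators) in a homogeneous basis of `V` form a `ℚ`-basis. -/
structure SullivanAlgebra extends CDGA where
  /-- The space of generators, as a graded subspace. -/
  V : ℤ → Submodule ℚ carrier
  V_le : ∀ i : ℤ, V i ≤ grading i
  /-- Simple connectedness: `V = V^{≥2}`. -/
  V_lower : ∀ i : ℤ, i ≤ 1 → V i = ⊥
  /-- Finite type. -/
  V_findim : ∀ i : ℤ, FiniteDimensional ℚ ↥(V i)
  /-- `ΛV` is free graded-commutative on `V`. -/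
  free : ∃ (ι : Type) (lo : LinearOrder ι) (deg : ι → ℤ) (g : ι → carrier),
    (∀ x : ι, g x ∈ V (deg x)) ∧
    (∀ i : ℤ, V i = Submodule.span ℚ (g '' {x : ι | deg x = i})) ∧
    LinearIndependent ℚ
      (fun e : {e : ι →₀ ℕ // ∀ x : ι, Odd (deg x) → e x ≤ 1} =>
        monomialIn lo g e.1) ∧
    ⊤ ≤ Submodule.span ℚ
      (Set.range fun e : {e : ι →₀ ℕ // ∀ x : ι, Odd (deg x) → e x ≤ 1} =>
        monomialIn lo g e.1)

/-- The set of homogeneous elements of positive degree. -/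
def CDGA.posSet (A : CDGA) : Set A.carrier :=
  {a : A.carrier | ∃ i : ℤ, 0 < i ∧ a ∈ A.grading i}

/-- The decomposable elements `Λ^{≥2}V = A⁺ · A⁺` of a connected cdga. -/
def CDGA.decomposables (A : CDGA) : Submodule ℚ A.carrier :=
  Submodule.span ℚ
    {z : A.carrier | ∃ x ∈ A.posSet, ∃ y ∈ A.posSet, z = x * y}

/-- A Sullivan algebra is minimal if `d(V) ⊆ Λ^{≥2}V`. -/
def SullivanAlgebra.IsMinimal (A : SullivanAlgebra) : Prop :=
  ∀ i : ℤ, ∀ v ∈ A.V i, A.d v ∈ A.toCDGA.decomposables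

/-- A Sullivan algebra is elliptic if both `V` and `H^*(ΛV, d)` are
finite-dimensional. -/
def SullivanAlgebra.Elliptic (A : SullivanAlgebra) : Prop :=
  (∃ N : ℤ, ∀ i : ℤ, N ≤ i → A.V i = ⊥) ∧
  FiniteDimensional ℚ A.toCDGA.Hspace

/-- The total dimension of the odd-degree part of `V`. -/
noncomputable def SullivanAlgebra.oddDim (A : SullivanAlgebra) : ℕ :=
  finsum fun i : ℤ => if Odd i then Module.finrank ℚ ↥(A.V i) else 0

/-- The total dimension of the even-degree part of `V`. -/
noncomputable def SullivanAlgebra.evenDim (A : SullivanAlgebra) : ℕ :=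
  finsum fun i : ℤ => if Even i then Module.finrank ℚ ↥(A.V i) else 0

/-- A (finite) sequence of elements of a ring is a regular sequence if each
element is a nonzerodivisor modulo the (left) ideal generated by the preceding
ones. -/
def IsRegularSeq {A : Type} [Ring A] {k : ℕ} (a : Fin k → A) : Prop :=
  ∀ (j : Fin k) (x : A),
    a j * x ∈ Ideal.span (a '' {j' : Fin k | j' < j}) →
    x ∈ Ideal.span (a '' {j' : Fin k | j' < j})

open RingTheory.Sequence in
theorem aux_krull {σ : Type} [Fintype σ] (k : ℕ) (f : Fin k → MvPolynomial σ ℚ)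
    (h0 : ∀ j, MvPolynomial.constantCoeff (f j) = 0)
    (hreg : ∀ (j : Fin k) (x : MvPolynomial σ ℚ),
      f j * x ∈ Ideal.span (f '' {j' | j' < j}) → x ∈ Ideal.span (f '' {j' | j' < j}))
    (hfin : FiniteDimensional ℚ (MvPolynomial σ ℚ ⧸ Ideal.span (Set.range f))) :
    k = Fintype.card σ := by
  classical
  set m : Ideal (MvPolynomial σ ℚ) := RingHom.ker (MvPolynomial.constantCoeff (σ := σ) (R := ℚ))
    with hm
  have hmax : m.IsMaximal := RingHom.ker_isMaximal_of_surjective _ 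
    (fun q => ⟨MvPolynomial.C q, by simp⟩)
  -- lower bound on the height
  have hlow : (Fintype.card σ : ℕ∞) ≤ m.height := by
    let e := Fintype.equivFin σ
    let φ : ℕ → MvPolynomial σ ℚ →ₐ[ℚ] MvPolynomial σ ℚ := fun i =>
      MvPolynomial.aeval (fun j => if (e j : ℕ) < i then 0 else MvPolynomial.X j)
    have hp : ∀ i, (RingHom.ker (φ i)).IsPrime := fun i => RingHom.ker_isPrime _
    have key : ∀ i, i ≤ Fintype.card σ → (i : ℕ∞) ≤ (RingHom.ker (φ i)).height := by
      intro i
      induction i with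
      | zero => intro _; simp
      | succ i ih =>
        intro hi
        have hlt : RingHom.ker (φ i) < RingHom.ker (φ (i+1)) := by
          have hcomp : (φ (i+1)).comp (φ i) = φ (i+1) := by
            apply MvPolynomial.algHom_ext
            intro j
            simp only [φ, AlgHom.comp_apply, MvPolynomial.aeval_X]
            split_ifs with h1 h2 h2
            · simp
            · omega
            · simp; omega
            · simp; intro h3; omega
          refine lt_of_le_of_ne ?_ ?_
          · intro x hx
            rw [RingHom.mem_ker] at hx ⊢
            rw [← hcomp, AlgHom.comp_apply, hx, map_zero]
          · intro heq
            have : MvPolynomial.X (e.symm ⟨i, by omega⟩) ∈ RingHom.ker (φ (i+1)) := by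
              rw [RingHom.mem_ker]; simp [φ]
            rw [← heq, RingHom.mem_ker] at this
            simp [φ] at this
        have := Ideal.height_add_one_le_of_lt_of_isPrime hlt
        refine le_trans ?_ this
        push_cast
        gcongr
        exact ih (by omega)
    have := key _ le_rfl
    refine this.trans (Ideal.height_mono ?_)
    intro x hx
    rw [RingHom.mem_ker] at hx
    rw [hm, RingHom.mem_ker]
    have hc : ((MvPolynomial.constantCoeff (σ := σ) (R := ℚ)).comp (φ (Fintype.card σ)).toRingHom)
      = MvPolynomial.constantCoeff := by
      apply MvPolynomial.ringHom_ext
      · intro r; simp [φ]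
      · intro j; simp [φ]
    rw [← hc]
    simp [hx]
  have hup : m.height ≤ (Fintype.card σ : ℕ∞) := by
    have h1 := Ideal.height_le_ringKrullDim_of_isPrime (I := m)
    rw [MvPolynomial.ringKrullDim_of_isNoetherianRing, ringKrullDim_eq_zero_of_field, zero_add,
      Nat.card_eq_fintype_card] at h1
    exact_mod_cast h1
  have hht : m.height = (Fintype.card σ : ℕ∞) := le_antisymm hup hlow
  have hle : Ideal.span (Set.range f) ≤ m := by
    rw [Ideal.span_le]; rintro _ ⟨j, rfl⟩; exact h0 j
  -- Krull
  have h1 : m.height ≤ (k : ℕ∞) := by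
    have hmin : m ∈ (Ideal.span (Set.range f)).minimalPrimes := by
      refine ⟨⟨hmax.isPrime, hle⟩, ?_⟩
      rintro q ⟨hq, hfq⟩ hqm
      have : IsArtinianRing (MvPolynomial σ ℚ ⧸ Ideal.span (Set.range f)) := 
        IsArtinianRing.of_finite ℚ _
      have hqmax : q.IsMaximal := by
        have hq' : (q.map (Ideal.Quotient.mk (Ideal.span (Set.range f)))).IsPrime :=
          Ideal.map_isPrime_of_surjective Ideal.Quotient.mk_surjective (by simpa using hfq)
        have hq'' := IsArtinianRing.isMaximal_of_isPrime (q.map (Ideal.Quotient.mk (Ideal.span (Set.range f))))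
        have := Ideal.comap_isMaximal_of_surjective (Ideal.Quotient.mk (Ideal.span (Set.range f))) Ideal.Quotient.mk_surjective (K := q.map (Ideal.Quotient.mk (Ideal.span (Set.range f))))
        rwa [Ideal.comap_map_of_surjective _ Ideal.Quotient.mk_surjective, ← RingHom.ker_eq_comap_bot, Ideal.mk_ker, sup_eq_left.2 hfq] at this
      exact (hqmax.eq_of_le hmax.ne_top hqm).ge
    have := Ideal.height_le_spanRank_toENat_of_mem_minimalPrimes _ _ hmin
    refine this.trans ?_
    have h2 := Submodule.spanRank_span_le_card (R := MvPolynomial σ ℚ) (Set.range f)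
    have h3 : Cardinal.mk (Set.range f) ≤ (k : Cardinal) := by
      simpa using Cardinal.mk_range_le (f := f)
    have := Cardinal.toENat.monotone' (h2.trans h3)
    simpa using this
  have h2 : (k : ℕ∞) ≤ m.height := by
    have hw : IsWeaklyRegular (MvPolynomial σ ℚ) (List.ofFn f) := by
      rw [isWeaklyRegular_iff_Fin]
      intro i
      have hi : i.1 < k := by simpa using i.2
      have e1 : Ideal.ofList ((List.ofFn f).take i) = Ideal.span (f '' {j' | j' < ⟨i, hi⟩}) := by
        unfold Ideal.ofList
        congr 1
        ext x
        simp only [List.mem_take_iff_getElem, Set.mem_ofPred_eq, Set.mem_image]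
        constructor
        · rintro ⟨j, hj, rfl⟩
          refine ⟨⟨j, by simp at hj; omega⟩, ?_, by simp⟩
          simp at hj; exact Fin.mk_lt_mk.2 (by omega)
        · rintro ⟨j, hj, rfl⟩
          exact ⟨j, by
            have : (j : ℕ) < i := hj
            simp; omega, by simp⟩
      rw [isSMulRegular_quotient_iff_mem_of_smul_mem]
      intro x hx
      rw [e1] at hx ⊢
      simp only [smul_eq_mul, Ideal.mul_top] at hx ⊢
      apply hreg ⟨i, hi⟩
      simpa using hx
    have hw2 := hw.isRegular_of_isLocalization_of_mem (Localization.AtPrime m) m (by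
      intro r hr
      obtain ⟨j, rfl⟩ := (List.mem_ofFn' _ _).1 hr
      exact h0 j)
    have h3 := ringKrullDim_add_length_eq_ringKrullDim_of_isRegular _ hw2
    rw [IsLocalization.AtPrime.ringKrullDim_eq_height m (Localization.AtPrime m)] at h3
    have hnt : Nontrivial (Localization.AtPrime m ⧸ Ideal.ofList (List.map (algebraMap (MvPolynomial σ ℚ) (Localization.AtPrime m)) (List.ofFn f))) := by
      have := hw2.top_ne_smul
      rw [Ideal.Quotient.nontrivial_iff]
      intro h; apply this; rw [h]; simp
    have h4 := ringKrullDim_nonneg_of_nontrivial (R := Localization.AtPrime m ⧸ Ideal.ofList (List.map (algebraMap (MvPolynomial σ ℚ) (Localization.AtPrime m)) (List.ofFn f)))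
    have h5 : ((k : ℕ∞) : WithBot ℕ∞) ≤ ((m.height : ℕ∞) : WithBot ℕ∞) := by
      rw [← h3]
      simp only [List.length_map, List.length_ofFn]
      exact le_add_of_nonneg_left h4
    exact_mod_cast h5
  have := le_antisymm (hht ▸ h2) (hht ▸ h1)
  exact_mod_cast this
/-- The submodule `a 0 M + ... + a (j-1) M`. -/
def auxJ {R V : Type*} [CommRing R] [AddCommGroup V] [Module R V]
    (a : ℕ → V →ₗ[R] V) (M : Submodule R V) : ℕ → Submodule R V
  | 0 => ⊥
  | j + 1 => M.map (a j) ⊔ auxJ a M j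

/-- Regularity of the first `k` operators on a submodule. -/
def auxReg {R V : Type*} [CommRing R] [AddCommGroup V] [Module R V]
    (k : ℕ) (a : ℕ → V →ₗ[R] V) (M : Submodule R V) : Prop :=
  ∀ j < k, ∀ x ∈ M, a j x ∈ auxJ a M j → x ∈ auxJ a M j

section
variable {R V : Type*} [CommRing R] [AddCommGroup V] [Module R V]

theorem auxJ_mono (a : ℕ → V →ₗ[R] V) {M M' : Submodule R V} (h : M ≤ M') (j : ℕ) :
    auxJ a M j ≤ auxJ a M' j := by
  induction j with
  | zero => exact le_rfl
  | succ j ih => exact sup_le_sup (Submodule.map_mono h) ih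

theorem auxJ_le (a : ℕ → V →ₗ[R] V) {M : Submodule R V} (h : ∀ i, M.map (a i) ≤ M) (j : ℕ) :
    auxJ a M j ≤ M := by
  induction j with
  | zero => exact bot_le
  | succ j ih => exact sup_le (h j) ih

theorem auxJ_map (a : ℕ → V →ₗ[R] V) (M : Submodule R V) (y : V →ₗ[R] V)
    (hy : ∀ i v, a i (y v) = y (a i v)) (j : ℕ) :
    auxJ a (M.map y) j = (auxJ a M j).map y := by
  induction j with
  | zero => simp [auxJ]
  | succ j ih =>
    rw [auxJ, auxJ, Submodule.map_sup, ih, ← Submodule.map_comp, ← Submodule.map_comp]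
    congr 2
    ext v; exact hy j v

theorem auxJ_smul (a : ℕ → V →ₗ[R] V) {M : Submodule R V} (h : ∀ i, M.map (a i) ≤ M)
    (hc : ∀ i j v, a i (a j v) = a j (a i v)) (i j : ℕ) :
    (auxJ a M j).map (a i) ≤ auxJ a M j := by
  rw [← auxJ_map a M (a i) (fun j v => hc j i v)]
  exact auxJ_mono a (h i) j

theorem auxReg_step (k : ℕ) (a : ℕ → V →ₗ[R] V) (M : Submodule R V) (y : V →ₗ[R] V)
    (h : ∀ i, M.map (a i) ≤ M)
    (hc : ∀ i j v, a i (a j v) = a j (a i v))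
    (hy : ∀ i v, a i (y v) = y (a i v))
    (hyM : M.map y ≤ M) (hyy : ∀ v, y (y v) = 0)
    (hker : ∀ x ∈ M, y x = 0 → ∃ u ∈ M, x = y u)
    (hreg : auxReg k a M) : auxReg k a (M.map y) := by
  have step : ∀ j < k, (∀ z, z ∈ auxJ a M j → z ∈ M.map y → z ∈ auxJ a (M.map y) j) →
      ∀ x ∈ M.map y, a j x ∈ auxJ a (M.map y) j → x ∈ auxJ a (M.map y) j := by
    intro j hj hinter x hx hax
    exact hinter x (hreg j hj x (hyM hx) (auxJ_mono a hyM j hax)) hx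
  have hinter : ∀ j ≤ k, (∀ z, z ∈ auxJ a M j → z ∈ M.map y → z ∈ auxJ a (M.map y) j) := by
    intro j
    induction j with
    | zero => intro _ z hz _; exact hz
    | succ j ih =>
      intro hj z hz hzy
      have ih' := ih (by omega)
      rw [auxJ, Submodule.mem_sup] at hz
      obtain ⟨_, ⟨u, hu, rfl⟩, i, hi, rfl⟩ := hz
      obtain ⟨v, hv, hvz⟩ := hzy
      have e0 : a j (y u) + y i = 0 := by
        rw [hy, ← map_add, ← hvz, hyy]
      have e1 : a j (y u) ∈ auxJ a (M.map y) j := by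
        rw [eq_neg_of_add_eq_zero_left e0]
        apply Submodule.neg_mem
        rw [auxJ_map a M y hy]
        exact Submodule.mem_map_of_mem hi
      have e2 := step j (by omega) ih' (y u) (Submodule.mem_map_of_mem hu) e1
      rw [auxJ_map a M y hy] at e2
      obtain ⟨i', hi', hyi⟩ := e2
      obtain ⟨u', hu', huu⟩ := hker (u - i') (M.sub_mem hu (auxJ_le a h j hi'))
        (by rw [map_sub, hyi, sub_self])
      have hu2 : u = y u' + i' := by rw [← huu]; abel
      have e3 : a j u + i = a j (y u') + (a j i' + i) := by rw [hu2, map_add]; abel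
      have hm1 : a j (y u') ∈ (M.map y).map (a j) :=
        Submodule.mem_map_of_mem (Submodule.mem_map_of_mem hu')
      have hm2 : a j i' + i ∈ auxJ a (M.map y) j := by
        apply ih'
        · exact Submodule.add_mem _ (auxJ_smul a h hc j j (Submodule.mem_map_of_mem hi')) hi
        · have : a j i' + i = y v - y (a j u') := by
            rw [hvz, e3, hy]; abel
          rw [this]
          exact Submodule.sub_mem _ (Submodule.mem_map_of_mem hv)
            (Submodule.mem_map_of_mem (h j (Submodule.mem_map_of_mem hu')))
      rw [e3, auxJ]
      exact Submodule.add_mem_sup hm1 hm2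
  intro j hj
  exact step j hj (hinter j hj.le)

end

/-! ### Exterior-type algebras -/

section
variable {P A : Type} [CommRing P] [Ring A] [Algebra P A]

/-- `P`-span of the squarefree products of `w 0, ..., w (s-1)`. -/
def auxN (P : Type) {A : Type} [CommRing P] [Ring A] [Algebra P A] (w : ℕ → A) : ℕ → Submodule P A
  | 0 => Submodule.span P {1}
  | s + 1 => auxN P w s ⊔ (auxN P w s).map (LinearMap.mulLeft P (w s))

/-- The index type for squarefree products. -/
def AuxIdx : ℕ → Type
  | 0 => Unit
  | s + 1 => AuxIdx s ⊕ AuxIdx s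

noncomputable instance auxIdxFintype : ∀ s, Fintype (AuxIdx s)
  | 0 => inferInstanceAs (Fintype Unit)
  | s + 1 =>
    letI := auxIdxFintype s
    inferInstanceAs (Fintype (AuxIdx s ⊕ AuxIdx s))

theorem auxIdx_card (s : ℕ) : Fintype.card (AuxIdx s) = 2 ^ s := by
  induction s with
  | zero => rfl
  | succ s ih =>
    have : Fintype.card (AuxIdx (s+1)) = Fintype.card (AuxIdx s) + Fintype.card (AuxIdx s) :=
      Fintype.card_sum
    rw [this, ih]; ring

/-- Squarefree products. -/
def auxMon (w : ℕ → A) : ∀ s, AuxIdx s → A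
  | 0 => fun _ => 1
  | s + 1 => Sum.elim (auxMon w s) (fun i => w s * auxMon w s i)

theorem auxN_eq_span (w : ℕ → A) (s : ℕ) :
    auxN P w s = Submodule.span P (Set.range (auxMon w s)) := by
  induction s with
  | zero =>
    rw [auxN]; congr 1
    ext x; constructor
    · rintro rfl; exact ⟨(), rfl⟩
    · rintro ⟨_, rfl⟩; rfl
  | succ s ih =>
    rw [auxN, ih, Submodule.map_span, ← Submodule.span_union]
    congr 1
    ext x
    constructor
    · rintro (⟨i, rfl⟩ | ⟨_, ⟨i, rfl⟩, rfl⟩)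
      · exact ⟨Sum.inl i, rfl⟩
      · exact ⟨Sum.inr i, rfl⟩
    · rintro ⟨i | i, rfl⟩
      · exact Or.inl ⟨i, rfl⟩
      · exact Or.inr ⟨_, ⟨i, rfl⟩, rfl⟩

theorem auxMon_indep_pred (w : ℕ → A) (s : ℕ)
    (h : LinearIndependent P (auxMon w (s+1))) :
    LinearIndependent P (auxMon w s) ∧
    ∀ x ∈ auxN P w s, ∀ y ∈ auxN P w s, x + w s * y = 0 → x = 0 ∧ y = 0 := by
  have h' : LinearIndependent P (Sum.elim (auxMon w s) (fun i => w s * auxMon w s i)) := h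
  have h1 := h'
  rw [linearIndependent_sum] at h1
  refine ⟨h1.1, ?_⟩
  intro x hx y hy hxy
  rw [auxN_eq_span, Submodule.mem_span_range_iff_exists_fun] at hx hy
  obtain ⟨c, rfl⟩ := hx
  obtain ⟨d, rfl⟩ := hy
  rw [Fintype.linearIndependent_iff] at h'
  have h2 := h' (Sum.elim c d) (by
    rw [Fintype.sum_sum_type]
    simpa [Finset.mul_sum] using hxy)
  have hc : ∀ i, c i = 0 := fun i => h2 (Sum.inl i)
  have hd : ∀ i, d i = 0 := fun i => h2 (Sum.inr i)
  simp [hc, hd]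

theorem auxMon_indep (w : ℕ → A) (r : ℕ) (h : LinearIndependent P (auxMon w r)) :
    ∀ s < r, ∀ x ∈ auxN P w s, ∀ y ∈ auxN P w s, x + w s * y = 0 → x = 0 ∧ y = 0 := by
  induction r with
  | zero => intro s hs; omega
  | succ r ih =>
    intro s hs
    obtain ⟨h1, h2⟩ := auxMon_indep_pred w r h
    rcases Nat.lt_succ_iff_lt_or_eq.1 hs with h3 | rfl
    · exact ih h1 s h3
    · exact h2

theorem auxN_le_succ (w : ℕ → A) (s : ℕ) : auxN P w s ≤ auxN P w (s+1) := le_sup_left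

theorem auxN_mono (w : ℕ → A) : Monotone (auxN P w) := monotone_nat_of_le_succ (auxN_le_succ w)

theorem auxN_one (w : ℕ → A) (s : ℕ) : (1 : A) ∈ auxN P w s :=
  auxN_mono w (Nat.zero_le s) (Submodule.subset_span rfl)

theorem auxN_mul_mem (w : ℕ → A) (hanti : ∀ i j, w i * w j = - (w j * w i))
    (hsq : ∀ i, w i * w i = 0) (s : ℕ) :
    ∀ i < s, ∀ x ∈ auxN P w s, w i * x ∈ auxN P w s := by
  induction s with
  | zero => intro i hi; omega
  | succ s ih =>
    intro i hi x hx
    rw [auxN, Submodule.mem_sup] at hx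
    obtain ⟨u, hu, _, ⟨v, hv, rfl⟩, rfl⟩ := hx
    simp only [LinearMap.mulLeft_apply]
    rw [mul_add, ← mul_assoc]
    rcases Nat.lt_succ_iff_lt_or_eq.1 hi with h3 | rfl
    · rw [hanti i s, neg_mul, mul_assoc]
      refine Submodule.add_mem _ (auxN_le_succ w s (ih i h3 u hu)) (Submodule.neg_mem _ ?_)
      exact Submodule.mem_sup_right ⟨w i * v, ih i h3 v hv, rfl⟩
    · rw [hsq, zero_mul, add_zero]
      exact Submodule.mem_sup_right ⟨u, hu, rfl⟩

/-- `auxOm w s t = w (s+t-1) * ... * w s` -/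
def auxOm (w : ℕ → A) (s : ℕ) : ℕ → A
  | 0 => 1
  | t + 1 => w (s + t) * auxOm w s t

theorem auxOm_succ_right (w : ℕ → A) (s t : ℕ) :
    auxOm w s (t+1) = auxOm w (s+1) t * w s := by
  induction t with
  | zero => simp [auxOm]
  | succ t ih =>
    rw [auxOm, ih, auxOm, mul_assoc]
    congr 2; omega

theorem auxOm_add (w : ℕ → A) (s t t' : ℕ) :
    auxOm w s (t+t') = auxOm w (s+t) t' * auxOm w s t := by
  induction t' with
  | zero => simp [auxOm]
  | succ t' ih =>
    rw [← add_assoc, auxOm, ih, auxOm, mul_assoc, add_assoc]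

theorem auxOm_sign (w : ℕ → A) (hanti : ∀ i j, w i * w j = - (w j * w i)) (i s t : ℕ) :
    w i * auxOm w s t = auxOm w s t * w i ∨ w i * auxOm w s t = - (auxOm w s t * w i) := by
  induction t with
  | zero => left; simp [auxOm]
  | succ t ih =>
    rw [auxOm, ← mul_assoc, hanti i, neg_mul, mul_assoc, mul_assoc]
    rcases ih with ih | ih
    · right; rw [ih]
    · left; rw [ih]; simp

theorem auxOm_mul_zero (w : ℕ → A) (hanti : ∀ i j, w i * w j = - (w j * w i))
    (hsq : ∀ i, w i * w i = 0) (i s t : ℕ) (h1 : s ≤ i) (h2 : i < s + t) :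
    auxOm w s t * w i = 0 ∧ w i * auxOm w s t = 0 := by
  have h3 : auxOm w s t * w i = 0 := by
    induction t with
    | zero => omega
    | succ t ih =>
      rcases Nat.lt_or_ge i (s + t) with h | h
      · rw [auxOm, mul_assoc, ih h, mul_zero]
      · have : i = s + t := by omega
        subst this
        rw [auxOm, mul_assoc]
        rcases auxOm_sign w hanti (s+t) s t with e | e
        · rw [← e, ← mul_assoc, hsq, zero_mul]
        · rw [← neg_eq_iff_eq_neg.2 e, mul_neg, ← mul_assoc, hsq, zero_mul, neg_zero]
  refine ⟨h3, ?_⟩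
  rcases auxOm_sign w hanti i s t with e | e
  · rw [e, h3]
  · rw [e, h3, neg_zero]

/-- Left multiplication by the top product reduces to the bottom part. -/
theorem auxOm_mul_reduce (w : ℕ → A) (hanti : ∀ i j, w i * w j = - (w j * w i))
    (hsq : ∀ i, w i * w i = 0) (s t : ℕ) (u : ℕ) (hu : u ≤ t) :
    ∀ x ∈ auxN P w (s + u), ∃ x' ∈ auxN P w s, auxOm w s t * x = auxOm w s t * x' := by
  induction u with
  | zero => intro x hx; exact ⟨x, hx, rfl⟩
  | succ u ih =>
    intro x hx
    rw [← add_assoc, auxN, Submodule.mem_sup] at hx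
    obtain ⟨y, hy, _, ⟨v, hv, rfl⟩, rfl⟩ := hx
    obtain ⟨x', hx', e⟩ := ih (by omega) y hy
    refine ⟨x', hx', ?_⟩
    rw [LinearMap.mulLeft_apply, mul_add, e, ← mul_assoc,
      (auxOm_mul_zero w hanti hsq (s+u) s t (by omega) (by omega)).1, zero_mul, add_zero]

theorem auxOm_inj (w : ℕ → A) (r : ℕ)
    (hI : ∀ s < r, ∀ x ∈ auxN P w s, ∀ y ∈ auxN P w s, x + w s * y = 0 → x = 0 ∧ y = 0)
    (s t : ℕ) (h : s + t ≤ r) : ∀ x ∈ auxN P w s, auxOm w s t * x = 0 → x = 0 := by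
  induction t generalizing s with
  | zero => intro x _ h; simpa [auxOm] using h
  | succ t ih =>
    intro x hx h0
    rw [auxOm_succ_right, mul_assoc] at h0
    have := ih (s+1) (by omega) (w s * x) (Submodule.mem_sup_right ⟨x, hx, rfl⟩) h0
    exact (hI s (by omega) 0 (Submodule.zero_mem _) x hx (by rw [this, zero_add])).2

theorem auxReg_descend (w : ℕ → A) (hanti : ∀ i j, w i * w j = - (w j * w i))
    (hsq : ∀ i, w i * w i = 0) (r : ℕ)
    (hI : ∀ s < r, ∀ x ∈ auxN P w s, ∀ y ∈ auxN P w s, x + w s * y = 0 → x = 0 ∧ y = 0)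
    (m : ℕ) (hm : m ≤ r) (k : ℕ) (a : ℕ → A) (hcent : ∀ i x, a i * x = x * a i)
    (haM : ∀ i, ∀ x ∈ auxN P w m, a i * x ∈ auxN P w m)
    (hreg : auxReg k (fun i => LinearMap.mulLeft P (a i)) (auxN P w m)) :
    ∀ t s, s + t = m → auxReg k (fun i => LinearMap.mulLeft P (a i))
      ((auxN P w m).map (LinearMap.mulLeft P (auxOm w s t))) := by
  intro t
  induction t with
  | zero =>
    intro s _
    have : (auxN P w m).map (LinearMap.mulLeft P (auxOm w s 0)) = auxN P w m := by
      simp [auxOm]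
    rw [this]; exact hreg
  | succ t ih =>
    intro s hs
    have h1 := ih (s+1) (by omega)
    set M := (auxN P w m).map (LinearMap.mulLeft P (auxOm w (s+1) t)) with hM
    have hsign := auxOm_sign w hanti s (s+1) t
    have hmap : M.map (LinearMap.mulLeft P (w s)) =
        (auxN P w m).map (LinearMap.mulLeft P (auxOm w s (t+1))) := by
      rw [hM, ← Submodule.map_comp, auxOm_succ_right, ← LinearMap.mulLeft_mul]
      rcases hsign with e | e
      · rw [e]
      · rw [e]
        have : LinearMap.mulLeft P (-(auxOm w (s+1) t * w s))
          = - LinearMap.mulLeft P (auxOm w (s+1) t * w s) := by ext; simp [mul_assoc]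
        rw [this, Submodule.map_neg]
    rw [← hmap]
    have hwm := auxN_mul_mem (P := P) w hanti hsq m s (by omega)
    refine auxReg_step k _ M _ ?_ ?_ ?_ ?_ ?_ ?_ h1
    · rintro i _ ⟨_, ⟨x, hx, rfl⟩, rfl⟩
      refine ⟨a i * x, haM i x hx, ?_⟩
      simp only [LinearMap.mulLeft_apply]
      rw [← mul_assoc, ← hcent, mul_assoc]
    · intro i j v
      simp only [LinearMap.mulLeft_apply]
      rw [← mul_assoc, hcent i, mul_assoc]
    · intro i v
      simp only [LinearMap.mulLeft_apply]
      rw [← mul_assoc, hcent i, mul_assoc]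
    · rintro _ ⟨_, ⟨x, hx, rfl⟩, rfl⟩
      simp only [LinearMap.mulLeft_apply]
      rcases hsign with e | e
      · exact ⟨w s * x, hwm x hx, by
          simp only [LinearMap.mulLeft_apply]; rw [← mul_assoc, ← e, mul_assoc]⟩
      · exact ⟨-(w s * x), Submodule.neg_mem _ (hwm x hx), by
          simp only [LinearMap.mulLeft_apply]
          rw [mul_neg, ← mul_assoc, ← neg_mul, ← e, mul_assoc]⟩
    · intro v; simp only [LinearMap.mulLeft_apply]; rw [← mul_assoc, hsq, zero_mul]
    · rintro _ ⟨x, hx, rfl⟩ h0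
      simp only [LinearMap.mulLeft_apply] at h0 ⊢
      have hx2 : x ∈ auxN P w (s + 1 + t) := by
        have : s + 1 + t = m := by omega
        rwa [this]
      obtain ⟨x', hx', e⟩ := auxOm_mul_reduce w hanti hsq (s+1) t t le_rfl x hx2
      rw [e] at h0 ⊢
      rw [auxN, Submodule.mem_sup] at hx'
      obtain ⟨c0, hc0, _, ⟨c1, hc1, rfl⟩, rfl⟩ := hx'
      simp only [LinearMap.mulLeft_apply] at h0 ⊢
      have h2 : auxOm w s (t+1) * c0 = 0 := by
        rw [auxOm_succ_right]
        have h3 : auxOm w (s+1) t * w s * (c0 + w s * c1) = 0 := by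
          rcases hsign with e | e
          · rw [← e, mul_assoc, h0]
          · rw [← neg_eq_iff_eq_neg.2 e, neg_mul, mul_assoc, h0, neg_zero]
        rw [mul_add] at h3
        have h4 : auxOm w (s+1) t * w s * (w s * c1) = 0 := by
          rw [mul_assoc, ← mul_assoc (w s), hsq, zero_mul, mul_zero]
        rwa [h4, add_zero] at h3
      have hc00 := auxOm_inj w r hI s (t+1) (by omega) c0 hc0 h2
      have hc1m : c1 ∈ auxN P w m := auxN_mono w (by omega) hc1
      rw [hc00, zero_add]
      rcases hsign with e | e
      · exact ⟨_, ⟨c1, hc1m, rfl⟩, by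
          simp only [LinearMap.mulLeft_apply]; rw [← mul_assoc, ← e, mul_assoc]⟩
      · exact ⟨_, ⟨-c1, Submodule.neg_mem _ hc1m, rfl⟩, by
          simp only [LinearMap.mulLeft_apply]
          rw [← mul_assoc, ← mul_assoc, e, neg_mul_neg]⟩

end

section
variable {R V V' : Type*} [CommRing R] [AddCommGroup V] [Module R V]
  [AddCommGroup V'] [Module R V']

theorem auxReg_transfer (k : ℕ) (a : ℕ → V' →ₗ[R] V') (f : ℕ → V →ₗ[R] V) (M : Submodule R V)
    (θ : V →ₗ[R] V') (hinj : ∀ x ∈ M, θ x = 0 → x = 0) (hf : ∀ i, M.map (f i) ≤ M)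
    (hθ : ∀ i, ∀ v ∈ M, a i (θ v) = θ (f i v))
    (hreg : auxReg k a (M.map θ)) : auxReg k f M := by
  have hJ : ∀ j, auxJ a (M.map θ) j = (auxJ f M j).map θ := by
    intro j
    induction j with
    | zero => simp [auxJ]
    | succ j ih =>
      rw [auxJ, auxJ, Submodule.map_sup, ih]
      congr 1
      ext x
      constructor
      · rintro ⟨_, ⟨v, hv, rfl⟩, rfl⟩
        exact ⟨f j v, ⟨v, hv, rfl⟩, (hθ j v hv).symm⟩
      · rintro ⟨_, ⟨v, hv, rfl⟩, rfl⟩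
        exact ⟨θ v, ⟨v, hv, rfl⟩, hθ j v hv⟩
  intro j hj x hx hax
  have h1 := hreg j hj (θ x) ⟨x, hx, rfl⟩ (by
    rw [hJ, hθ j x hx]; exact ⟨_, hax, rfl⟩)
  rw [hJ] at h1
  obtain ⟨x', hx', e⟩ := h1
  have : x' - x = 0 := hinj _ (M.sub_mem (auxJ_le f hf j hx') hx) (by rw [map_sub, e, sub_self])
  rw [sub_eq_zero] at this
  rwa [← this]

end

section
variable {P A : Type} [CommRing P] [Ring A] [Algebra P A]

theorem auxRegSeq_iff {S : Type} [Ring S] (φ : S →+* A) (hφ : Function.Injective φ)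
    (M : Submodule P A) (hM : ∀ x, x ∈ M ↔ ∃ s, φ s = x) (k : ℕ) (a : Fin k → S)
    (a' : ℕ → A) (ha : ∀ j : Fin k, a' j = φ (a j)) (hcent : ∀ i x, a' i * x = x * a' i) :
    IsRegularSeq a ↔ auxReg k (fun i => LinearMap.mulLeft P (a' i)) M := by
  have key : ∀ (n : ℕ) (_ : n ≤ k) (x : S), x ∈ Ideal.span (a '' {j' : Fin k | (j' : ℕ) < n}) ↔
      φ x ∈ auxJ (fun i => LinearMap.mulLeft P (a' i)) M n := by
    intro n hn x
    constructor
    · intro hx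
      induction hx using Submodule.span_induction with
      | mem x hx =>
        obtain ⟨j, hj, rfl⟩ := hx
        have hj' : (j : ℕ) < n := hj
        clear hj hn
        induction n with
        | zero => omega
        | succ n ih =>
          rw [auxJ]
          rcases Nat.lt_succ_iff_lt_or_eq.1 hj' with h | h
          · exact Submodule.mem_sup_right (ih h)
          · refine Submodule.mem_sup_left ⟨1, (hM 1).2 ⟨1, map_one φ⟩, ?_⟩
            simp [← h, ha]
      | zero => simp
      | add x y _ _ hx hy => rw [map_add]; exact Submodule.add_mem _ hx hy
      | smul c x _ hx =>
        have h1 := auxJ_map (fun i => LinearMap.mulLeft P (a' i)) M (LinearMap.mulLeft P (φ c))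
          (fun i v => by
            simp only [LinearMap.mulLeft_apply]; rw [← mul_assoc, hcent, mul_assoc]) n
        have h2 : M.map (LinearMap.mulLeft P (φ c)) ≤ M := by
          rintro _ ⟨y, hy, rfl⟩
          obtain ⟨s, rfl⟩ := (hM y).1 hy
          exact (hM _).2 ⟨c * s, by simp⟩
        apply auxJ_mono _ h2 n
        rw [h1]
        exact ⟨φ x, hx, by simp⟩
    · induction n generalizing x with
      | zero =>
        intro hx
        have : φ x = 0 := hx
        rw [map_eq_zero_iff φ hφ] at this
        rw [this]; exact Submodule.zero_mem _
      | succ n ih =>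
        intro hx
        rw [auxJ, Submodule.mem_sup] at hx
        obtain ⟨_, ⟨u, hu, rfl⟩, v, hv, e⟩ := hx
        obtain ⟨u, rfl⟩ := (hM u).1 hu
        have hn' : n < k := by omega
        have han : a' n = φ (a ⟨n, hn'⟩) := ha ⟨n, hn'⟩
        have hv2 : v = φ (x - u * a ⟨n, hn'⟩) := by
          rw [map_sub, map_mul, ← e, ← han, ← hcent]
          simp
        rw [hv2] at hv
        have h3 := ih (by omega) _ hv
        have h4 : x = u * a ⟨n, hn'⟩ + (x - u * a ⟨n, hn'⟩) := by abel
        rw [h4]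
        refine Ideal.add_mem _ (Ideal.mul_mem_left _ _ (Ideal.subset_span
          ⟨⟨n, hn'⟩, Nat.lt_succ_self n, rfl⟩)) ?_
        refine Ideal.span_mono (Set.image_mono ?_) h3
        intro j hj
        exact Nat.lt_succ_of_lt hj
  constructor
  · intro h j hj x hx hax
    obtain ⟨s, rfl⟩ := (hM x).1 hx
    refine (key j hj.le s).1 (h ⟨j, hj⟩ s ((key j hj.le _).2 ?_))
    rw [map_mul, ← ha ⟨j, hj⟩]
    exact hax
  · intro h j x hx
    refine (key j j.2.le x).2 (h j j.2 (φ x) ((hM _).2 ⟨x, rfl⟩) ?_)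
    have := (key j j.2.le _).1 hx
    rw [map_mul, ← ha] at this
    exact this

/-- Regularity passes from `auxN P w m` to the base `auxN P w 0`. -/
theorem auxReg_base (w : ℕ → A) (hanti : ∀ i j, w i * w j = - (w j * w i))
    (hsq : ∀ i, w i * w i = 0) (r : ℕ)
    (hI : ∀ s < r, ∀ x ∈ auxN P w s, ∀ y ∈ auxN P w s, x + w s * y = 0 → x = 0 ∧ y = 0)
    (m : ℕ) (hm : m ≤ r) (k : ℕ) (a : ℕ → A) (hcent : ∀ i x, a i * x = x * a i)
    (haM : ∀ i, ∀ x ∈ auxN P w m, a i * x ∈ auxN P w m)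
    (hreg : auxReg k (fun i => LinearMap.mulLeft P (a i)) (auxN P w m))
    (f : ℕ → P) (hf : ∀ i, auxOm w 0 m * a i = auxOm w 0 m * algebraMap P A (f i)) :
    auxReg k (fun i => LinearMap.mulLeft P (algebraMap P A (f i))) (auxN P w 0) := by
  have h0 := auxReg_descend w hanti hsq r hI m hm k a hcent haM hreg m 0 (by omega)
  have h1 : (auxN P w m).map (LinearMap.mulLeft P (auxOm w 0 m)) =
      (auxN P w 0).map (LinearMap.mulLeft P (auxOm w 0 m)) := by
    apply le_antisymm
    · rintro _ ⟨x, hx, rfl⟩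
      obtain ⟨x', hx', e⟩ := auxOm_mul_reduce (P := P) w hanti hsq 0 m m le_rfl x (by simpa using hx)
      exact ⟨x', hx', e.symm⟩
    · exact Submodule.map_mono (auxN_mono w (Nat.zero_le m))
  rw [h1] at h0
  refine auxReg_transfer k _ _ _ _ ?_ ?_ ?_ h0
  · intro x hx h
    exact auxOm_inj w r hI 0 m (by omega) x hx h
  · rintro i _ ⟨x, hx, rfl⟩
    rw [LinearMap.mulLeft_apply, ← Algebra.smul_def]
    exact Submodule.smul_mem _ _ hx
  · intro i v hv
    rw [auxN, Submodule.mem_span_singleton] at hv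
    obtain ⟨p, rfl⟩ := hv
    simp only [LinearMap.mulLeft_apply]
    simp only [mul_smul_comm, mul_one]
    rw [hcent, hf]

end

theorem aux_monomialIn_univ {A : Type} [Ring A] {ι : Type} [Fintype ι] (lo : LinearOrder ι)
    (g : ι → A) (e : ι →₀ ℕ) :
    monomialIn lo g e =
      (letI := lo; (((Finset.univ : Finset ι).sort (· ≤ ·)).map fun x => g x ^ e x).prod) := by
  let := lo
  have h : e.support.sort (· ≤ ·) =
      ((Finset.univ : Finset ι).sort (· ≤ ·)).filter (fun x => e x ≠ 0) := by
    refine List.Perm.eq_of_pairwise (le := (· ≤ ·)) ?_ ?_ ?_ ?_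
    · intro a b _ _ h1 h2; exact le_antisymm h1 h2
    · exact Finset.pairwise_sort _ _
    · exact (Finset.pairwise_sort _ _).filter _
    · rw [List.perm_ext_iff_of_nodup (Finset.sort_nodup _ _) ((Finset.sort_nodup _ _).filter _)]
      intro a; simp
  show ((e.support.sort (· ≤ ·)).map fun x => g x ^ e x).prod = _
  rw [h]
  generalize (Finset.univ : Finset ι).sort (· ≤ ·) = l
  induction l with
  | nil => simp
  | cons x l ih =>
    by_cases hx : e x = 0
    · simp [hx, ← ih]
    · simp [hx, ← ih]

theorem aux_list_prod_mul {A ι : Type} [Ring A] (l : List ι) (c o : ι → A)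
    (hc : ∀ x z, c x * z = z * c x) :
    (l.map fun x => c x * o x).prod = (l.map c).prod * (l.map o).prod := by
  induction l with
  | nil => simp
  | cons x l ih =>
    simp only [List.map_cons, List.prod_cons, ih]
    have : ∀ z, (l.map c).prod * z = z * (l.map c).prod := by
      clear ih
      induction l with
      | nil => simp
      | cons y l ih => intro z; simp only [List.map_cons, List.prod_cons]
                       rw [mul_assoc, ih, ← mul_assoc, hc, mul_assoc]
    rw [mul_assoc, mul_assoc, ← mul_assoc (o x), ← this (o x), mul_assoc]

open Classical in
/-- The exponent vector with even part `α` and odd part `s`. -/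
noncomputable def auxExp {ι : Type} [Fintype ι] (deg : ι → ℤ) (α : {x : ι // Even (deg x)} →₀ ℕ)
    (s : {x : ι // ¬ Even (deg x)} → Fin 2) : ι →₀ ℕ :=
  Finsupp.equivFunOnFinite.symm
    (fun x => if h : Even (deg x) then α ⟨x, h⟩ else ((s ⟨x, h⟩ : Fin 2) : ℕ))

section
variable {A : Type} [Ring A] [Algebra ℚ A] {ι : Type} [Fintype ι] (lo : LinearOrder ι)
    (deg : ι → ℤ) (g : ι → A)
    [Algebra (MvPolynomial {x : ι // Even (deg x)} ℚ) A]
    [IsScalarTower ℚ (MvPolynomial {x : ι // Even (deg x)} ℚ) A]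

theorem aux_monomialIn_split
    (hX : ∀ x : {x : ι // Even (deg x)},
      algebraMap (MvPolynomial {x : ι // Even (deg x)} ℚ) A (MvPolynomial.X x) = g x) (α : {x : ι // Even (deg x)} →₀ ℕ)
    (s : {x : ι // ¬ Even (deg x)} → Fin 2) :
    monomialIn lo g (auxExp deg α s) =
      (MvPolynomial.monomial α (1 : ℚ)) • monomialIn lo g (auxExp deg 0 s) := by
  classical
  rw [aux_monomialIn_univ, aux_monomialIn_univ, Algebra.smul_def]
  let := lo
  let c : ι → MvPolynomial {x : ι // Even (deg x)} ℚ := fun x =>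
    if h : Even (deg x) then MvPolynomial.X ⟨x, h⟩ ^ α ⟨x, h⟩ else 1
  have h1 : ∀ x, g x ^ (auxExp deg α s) x = algebraMap _ A (c x) * g x ^ (auxExp deg 0 s) x := by
    intro x
    by_cases h : Even (deg x)
    · simp [auxExp, c, h, hX]
    · simp [auxExp, c, h]
  simp only [h1]
  rw [aux_list_prod_mul _ _ _ (fun x z => Algebra.commutes _ _)]
  congr 1
  have h2 : (List.map (fun x => algebraMap _ A (c x)) ((Finset.univ : Finset ι).sort (· ≤ ·))).prod
      = algebraMap _ A ((((Finset.univ : Finset ι).sort (· ≤ ·)).map c).prod) := by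
    rw [map_list_prod, List.map_map]; rfl
  rw [h2]
  congr 1
  have h3 : (((Finset.univ : Finset ι).sort (· ≤ ·)).map c).prod = ∏ x, c x := by
    rw [Finset.prod_eq_multiset_prod, ← Finset.sort_eq (Finset.univ : Finset ι) (· ≤ ·),
      Multiset.map_coe, Multiset.prod_coe]
  rw [h3, MvPolynomial.monomial_eq, map_one, one_mul, Finsupp.prod_fintype _ _ (by simp)]
  rw [← Fintype.prod_subtype_mul_prod_subtype (fun x => Even (deg x)) c]
  rw [Finset.prod_eq_one (s := (Finset.univ : Finset {x // ¬ Even (deg x)})), mul_one]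
  · apply Finset.prod_congr rfl
    rintro ⟨x, hx⟩ _
    simp [c, hx]
  · rintro ⟨x, hx⟩ _
    simp [c, hx]

theorem aux_old_inj
    (hX : ∀ x : {x : ι // Even (deg x)},
      algebraMap (MvPolynomial {x : ι // Even (deg x)} ℚ) A (MvPolynomial.X x) = g x)
    (hLI : LinearIndependent ℚ
      (fun e : {e : ι →₀ ℕ // ∀ x : ι, Odd (deg x) → e x ≤ 1} => monomialIn lo g e.1)) :
    Function.Injective (Fintype.linearCombination (MvPolynomial {x : ι // Even (deg x)} ℚ)
      (fun s : {x : ι // ¬ Even (deg x)} → Fin 2 => monomialIn lo g (auxExp deg 0 s))) := by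
  classical
  set P := MvPolynomial {x : ι // Even (deg x)} ℚ
  set L := (Fintype.linearCombination P
      (fun s : {x : ι // ¬ Even (deg x)} → Fin 2 => monomialIn lo g (auxExp deg 0 s)))
  let B := Pi.basis (fun _ : ({x : ι // ¬ Even (deg x)} → Fin 2) =>
    MvPolynomial.basisMonomials {x : ι // Even (deg x)} ℚ)
  let em : (Σ _ : ({x : ι // ¬ Even (deg x)} → Fin 2), ({x : ι // Even (deg x)} →₀ ℕ)) →
      {e : ι →₀ ℕ // ∀ x : ι, Odd (deg x) → e x ≤ 1} := fun p =>
    ⟨auxExp deg p.2 p.1, by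
      intro x hx
      have : ¬ Even (deg x) := by simpa using hx
      simp [auxExp, this]
      omega⟩
  have hem : Function.Injective em := by
    rintro ⟨s, α⟩ ⟨s', α'⟩ h
    have h' : auxExp deg α s = auxExp deg α' s' := congrArg Subtype.val h
    have hs : s = s' := by
      funext ⟨x, hx⟩
      have := DFunLike.congr_fun h' x
      simp [auxExp, hx] at this
      exact Fin.ext this
    have hα : α = α' := by
      ext ⟨x, hx⟩
      have := DFunLike.congr_fun h' x
      simpa [auxExp, hx] using this
    rw [hs, hα]
  have h1 := hLI.comp em hem
  have h2 : LinearIndependent ℚ ((L.restrictScalars ℚ) ∘ B) := by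
    convert h1 using 1
    funext ⟨s, α⟩
    simp only [Function.comp_apply, LinearMap.coe_restrictScalars]
    show L (B ⟨s, α⟩) = monomialIn lo g (auxExp deg α s)
    rw [aux_monomialIn_split lo deg g hX]
    simp only [B, Pi.basis_apply, L, MvPolynomial.coe_basisMonomials]
    simp [Fintype.linearCombination_apply_single]
  have h3 : LinearMap.ker (L.restrictScalars ℚ) = ⊥ := by
    rw [LinearMap.ker_eq_bot']
    intro x hx
    rw [← B.linearCombination_repr x, Finsupp.apply_linearCombination] at hx
    have := (linearIndependent_iff.1 h2) _ hx
    simpa using this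
  have h4 := LinearMap.ker_eq_bot.1 h3
  exact fun x y h => h4 h

theorem aux_new_indep
    (hX : ∀ x : {x : ι // Even (deg x)},
      algebraMap (MvPolynomial {x : ι // Even (deg x)} ℚ) A (MvPolynomial.X x) = g x)
    (hLI : LinearIndependent ℚ
      (fun e : {e : ι →₀ ℕ // ∀ x : ι, Odd (deg x) → e x ≤ 1} => monomialIn lo g e.1))
    (w : ℕ → A) (r : ℕ) (hr : Nat.card {x : ι // ¬ Even (deg x)} = r)
    (htop : auxN (MvPolynomial {x : ι // Even (deg x)} ℚ) w r = ⊤) :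
    LinearIndependent (MvPolynomial {x : ι // Even (deg x)} ℚ) (auxMon w r) := by
  classical
  set P := MvPolynomial {x : ι // Even (deg x)} ℚ
  have hcard : Fintype.card (AuxIdx r) = Fintype.card ({x : ι // ¬ Even (deg x)} → Fin 2) := by
    rw [auxIdx_card, Fintype.card_fun, ← Nat.card_eq_fintype_card (α := {x : ι // ¬ Even (deg x)}),
      hr, Fintype.card_fin]
  let e := Fintype.equivOfCardEq hcard
  have hold := aux_old_inj lo deg g hX hLI
  have hspan : ⊤ ≤ Submodule.span P (Set.range (auxMon w r)) := by
    rw [← auxN_eq_span, htop]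
  have hfin : Module.Finite P A := ⟨⟨Finset.univ.image (auxMon w r), by
    rw [Finset.coe_image, Finset.coe_univ, Set.image_univ]; exact top_le_iff.1 hspan⟩⟩
  have hsurj : Function.Surjective (Fintype.linearCombination P (auxMon w r)) := by
    rw [← LinearMap.range_eq_top, Fintype.range_linearCombination]
    exact top_le_iff.1 hspan
  have hinj := OrzechProperty.injective_of_surjective_of_injective
    ((Fintype.linearCombination P
      (fun s : {x : ι // ¬ Even (deg x)} → Fin 2 => monomialIn lo g (auxExp deg 0 s))).comp
      (LinearEquiv.funCongrLeft P P e.symm).toLinearMap)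
    (Fintype.linearCombination P (auxMon w r))
    (by rw [LinearMap.coe_comp]; exact hold.comp (LinearEquiv.injective _)) hsurj
  rw [Fintype.linearIndependent_iff]
  intro c hc
  have h0 := hinj (a₁ := c) (a₂ := 0) (by rw [map_zero]; exact hc)
  exact fun i => congrFun h0 i

end

section
variable {P A : Type} [CommRing P] [Ring A] [Algebra P A]

theorem aux_algebraMap_inj (w : ℕ → A) (r : ℕ) (h : LinearIndependent P (auxMon w r)) :
    Function.Injective (algebraMap P A) := by
  rw [injective_iff_map_eq_zero]
  intro c hc
  have hne : Nonempty (AuxIdx r) := by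
    rw [← Fintype.card_pos_iff, auxIdx_card]; positivity
  obtain ⟨i⟩ := hne
  have := (linearIndependent_iff.1 h) (Finsupp.single i c) (by
    rw [Finsupp.linearCombination_single, Algebra.smul_def, hc, zero_mul])
  simpa using this

theorem auxN_le_subalgebra {K : Type} [CommRing K] [Algebra K A] (w : ℕ → A)
    (S : Subalgebra K A)
    (hP : ∀ p : P, algebraMap P A p ∈ S) (s : ℕ) (hw : ∀ i < s, w i ∈ S) :
    ∀ x ∈ auxN P w s, x ∈ S := by
  induction s with
  | zero =>
    intro x hx
    obtain ⟨p, rfl⟩ := Submodule.mem_span_singleton.1 hx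
    rw [Algebra.smul_def, mul_one]; exact hP p
  | succ s ih =>
    intro x hx
    obtain ⟨y, hy, z, hz, rfl⟩ := Submodule.mem_sup.1 hx
    obtain ⟨u, hu, rfl⟩ := hz
    have ih := ih (fun i hi => hw i (by omega))
    exact S.add_mem (ih y hy) (S.mul_mem (hw s (by omega)) (ih u hu))

theorem auxN_adjoin {K : Type} [CommRing K] [Algebra K A] [Algebra K P] [IsScalarTower K P A]
    (N : Submodule P A) (h1 : (1 : A) ∈ N)
    (S : Set A) (hS : ∀ z ∈ S, ∀ n ∈ N, z * n ∈ N) :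
    ∀ x ∈ Algebra.adjoin K S, x ∈ N := by
  have key : ∀ x ∈ Algebra.adjoin K S, ∀ n ∈ N, x * n ∈ N := by
    intro x hx
    induction hx using Algebra.adjoin_induction with
    | mem x hx => exact hS x hx
    | algebraMap c =>
      intro n hn
      rw [← Algebra.smul_def, ← algebraMap_smul P c n]
      exact N.smul_mem _ hn
    | add x y _ _ hx hy => intro n hn; rw [add_mul]; exact N.add_mem (hx n hn) (hy n hn)
    | mul x y _ _ hx hy => intro n hn; rw [mul_assoc]; exact hx _ (hy n hn)
  intro x hx
  simpa using key x hx 1 h1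

/-- The key computation: `Ω · d z` lies in `Ω · (f)`. -/
theorem aux_dz (w : ℕ → A) (hanti : ∀ i j, w i * w j = - (w j * w i))
    (hsq : ∀ i, w i * w i = 0) (m k : ℕ) (d : A → A)
    (dadd : ∀ x y, d (x + y) = d x + d y) (dP : ∀ p : P, d (algebraMap P A p) = 0)
    (dw : ∀ i u, d (w i * u) = d (w i) * u - w i * d u)
    (dw0 : ∀ i < m, d (w i) = 0) (a : ℕ → A) (hcent : ∀ i x, a i * x = x * a i)
    (dw1 : ∀ j < k, d (w (m + j)) = a j) (f : ℕ → P)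
    (hf : ∀ i, auxOm w 0 m * a i = auxOm w 0 m * algebraMap P A (f i)) (s : ℕ) (hs : s ≤ m + k) :
    ∀ z ∈ auxN P w s, ∃ q ∈ Ideal.span (f '' {j | j < k}),
      auxOm w 0 (m + k) * d z = auxOm w 0 (m + k) * algebraMap P A q := by
  have hf' : ∀ i, auxOm w 0 (m + k) * a i = auxOm w 0 (m + k) * algebraMap P A (f i) := by
    intro i
    rw [auxOm_add, mul_assoc, hf, mul_assoc]
  induction s with
  | zero =>
    intro z hz
    obtain ⟨p, rfl⟩ := Submodule.mem_span_singleton.1 hz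
    refine ⟨0, Ideal.zero_mem _, ?_⟩
    rw [Algebra.smul_def, mul_one, dP, map_zero]
  | succ s ih =>
    intro z hz
    obtain ⟨x, hx, z, hz2, rfl⟩ := Submodule.mem_sup.1 hz
    obtain ⟨y, hy, rfl⟩ := hz2
    obtain ⟨q, hq, hxq⟩ := ih (by omega) x hx
    show ∃ q ∈ _, _ * d (x + w s * y) = _
    have hΩ : auxOm w 0 (m + k) * w s = 0 :=
      (auxOm_mul_zero w hanti hsq s 0 (m + k) (by omega) (by omega)).1
    rw [dadd, dw, mul_add, hxq, mul_sub, ← mul_assoc _ (w s), hΩ, zero_mul, sub_zero]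
    by_cases hsm : s < m
    · exact ⟨q, hq, by rw [dw0 s hsm, zero_mul, mul_zero, add_zero]⟩
    · obtain ⟨j, rfl⟩ : ∃ j, s = m + j := ⟨s - m, by omega⟩
      have hj : j < k := by omega
      have hy' : y ∈ auxN P w (0 + (m + k)) := auxN_mono w (by omega) hy
      obtain ⟨y', hy0, hyy⟩ := auxOm_mul_reduce w hanti hsq 0 (m + k) (m + k) le_rfl y hy'
      obtain ⟨p, rfl⟩ := Submodule.mem_span_singleton.1 hy0
      refine ⟨q + f j * p, Ideal.add_mem _ hq (Ideal.mul_mem_right _ _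
        (Ideal.subset_span ⟨j, hj, rfl⟩)), ?_⟩
      rw [dw1 j hj, hcent, ← mul_assoc, hyy, map_add, mul_add, Algebra.smul_def, mul_one]
      congr 1
      rw [mul_assoc, ← hcent, ← mul_assoc, hf', map_mul, mul_assoc]

theorem aux_boundary (w : ℕ → A) (hanti : ∀ i j, w i * w j = - (w j * w i))
    (hsq : ∀ i, w i * w i = 0) (m k : ℕ) (hLI : LinearIndependent P (auxMon w (m + k)))
    (htop : auxN P w (m + k) = ⊤) (d : A → A)
    (dadd : ∀ x y, d (x + y) = d x + d y) (dP : ∀ p : P, d (algebraMap P A p) = 0)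
    (dw : ∀ i u, d (w i * u) = d (w i) * u - w i * d u)
    (dw0 : ∀ i < m, d (w i) = 0) (a : ℕ → A) (hcent : ∀ i x, a i * x = x * a i)
    (dw1 : ∀ j < k, d (w (m + j)) = a j) (f : ℕ → P)
    (hf : ∀ i, auxOm w 0 m * a i = auxOm w 0 m * algebraMap P A (f i))
    (p : P) (z : A) (hz : d z = algebraMap P A p) : p ∈ Ideal.span (f '' {j | j < k}) := by
  obtain ⟨q, hq, h⟩ := aux_dz w hanti hsq m k d dadd dP dw dw0 a hcent dw1 f hf (m + k) le_rfl z
    (by rw [htop]; trivial)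
  have h1 : auxOm w 0 (m + k) * algebraMap P A (p - q) = 0 := by
    rw [map_sub, mul_sub, ← h, hz, sub_self]
  have h2 := auxOm_inj w (m + k) (auxMon_indep w (m + k) hLI) 0 (m + k) (by omega) _
    (Submodule.mem_span_singleton.2 ⟨p - q, by rw [Algebra.smul_def, mul_one]⟩) h1
  have h3 := (injective_iff_map_eq_zero _).1 (aux_algebraMap_inj w (m + k) hLI) _ h2
  rwa [sub_eq_zero.1 h3]

/-- Reduction of elements of `N_s` modulo the `w_i`. -/
theorem aux_reduce (w : ℕ → A) (hanti : ∀ i j, w i * w j = - (w j * w i))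
    (hsq : ∀ i, w i * w i = 0) (m : ℕ) (T : AddSubgroup A) (hT : ∀ i u, w i * u ∈ T)
    (s : ℕ) (hs : s ≤ m) : ∀ z ∈ auxN P w s, ∃ p : P, z - algebraMap P A p ∈ T ∧
      auxOm w 0 m * z = auxOm w 0 m * algebraMap P A p := by
  induction s with
  | zero =>
    intro z hz
    obtain ⟨p, rfl⟩ := Submodule.mem_span_singleton.1 hz
    refine ⟨p, ?_, ?_⟩ <;> simp [Algebra.smul_def, T.zero_mem]
  | succ s ih =>
    intro z hz
    obtain ⟨x, hx, z, hz2, rfl⟩ := Submodule.mem_sup.1 hz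
    obtain ⟨y, hy, rfl⟩ := hz2
    obtain ⟨p, hp, hxp⟩ := ih (by omega) x hx
    refine ⟨p, ?_, ?_⟩
    · show x + w s * y - _ ∈ T
      rw [add_sub_right_comm]
      exact T.add_mem hp (hT s y)
    · show _ * (x + w s * y) = _
      rw [mul_add, ← mul_assoc _ (w s),
        (auxOm_mul_zero w hanti hsq s 0 m (by omega) (by omega)).1, zero_mul, add_zero, hxp]

end

/-- The span of the odd-degree homogeneous elements. -/
def auxOddPart (A : CDGA) : Submodule ℚ A.carrier := ⨆ i : ℤ, ⨆ _ : Odd i, A.grading i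

/-- The span of the homogeneous elements of positive degree. -/
def auxPosPart (A : CDGA) : Submodule ℚ A.carrier := ⨆ i : ℤ, ⨆ _ : 0 < i, A.grading i

theorem auxBiSup_induction {M : Type} [AddCommGroup M] [Module ℚ M] (p : ℤ → Prop)
    (G : ℤ → Submodule ℚ M) (C : M → Prop) (h0 : C 0) (hadd : ∀ x y, C x → C y → C (x + y))
    (hG : ∀ i, p i → ∀ x ∈ G i, C x) : ∀ x ∈ (⨆ i : ℤ, ⨆ _ : p i, G i), C x := by
  intro x hx
  induction hx using Submodule.iSup_induction' with
  | mem i x hx =>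
    by_cases h : p i
    · simp only [h, iSup_pos] at hx; exact hG i h x hx
    · simp only [h, iSup_false, not_false_eq_true, iSup_neg, Submodule.mem_bot] at hx; rw [hx]; exact h0
  | zero => exact h0
  | add x y _ _ hx hy => exact hadd x y hx hy

theorem aux_grading_induction (A : CDGA) (C : A.carrier → Prop) (h0 : C 0)
    (hadd : ∀ x y, C x → C y → C (x + y))
    (hG : ∀ i, ∀ x ∈ A.grading i, C x) : ∀ x, C x := by
  intro x
  have hx : x ∈ (⨆ i : ℤ, A.grading i) := by
    rw [A.internal.submodule_iSup_eq_top]; trivial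
  induction hx using Submodule.iSup_induction' with
  | mem i x hx => exact hG i x hx
  | zero => exact h0
  | add x y _ _ hx hy => exact hadd x y hx hy

theorem aux_central (A : CDGA) (i : ℤ) (hi : Even i) (x : A.carrier) (hx : x ∈ A.grading i) :
    ∀ z, x * z = z * x := by
  apply aux_grading_induction
  · simp
  · intro y z hy hz; rw [mul_add, add_mul, hy, hz]
  · intro j z hz
    rw [A.gcomm hx hz, Even.neg_one_zpow (hi.mul_right j), one_smul]

theorem aux_anticomm (A : CDGA) : ∀ x ∈ auxOddPart A, ∀ y ∈ auxOddPart A, x * y = -(y * x) := by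
  apply auxBiSup_induction
  · simp
  · intro x x' hx hx' y hy; rw [add_mul, mul_add, hx y hy, hx' y hy]; abel
  intro i hi x hx
  apply auxBiSup_induction
  · simp
  · intro x x' hx hx'; rw [add_mul, mul_add, hx, hx']; abel
  intro j hj y hy
  rw [A.gcomm hx hy, Odd.neg_one_zpow (hi.mul hj)]; simp

theorem aux_sq (A : CDGA) : ∀ x ∈ auxOddPart A, x * x = 0 := by
  intro x hx
  have h := aux_anticomm A x hx x hx
  have h2 : (2 : ℚ) • (x * x) = 0 := by rw [two_smul]; nth_rw 1 [h]; simp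
  simpa using h2

theorem aux_d_one (A : CDGA) : A.d 1 = 0 := by
  have := A.leibniz A.one_mem 1
  simpa using this

theorem aux_d_odd (A : CDGA) : ∀ x ∈ auxOddPart A, ∀ u, A.d (x * u) = A.d x * u - x * A.d u := by
  apply auxBiSup_induction
  · simp
  · intro x x' hx hx' y; rw [add_mul, map_add, hx, hx', map_add, add_mul, add_mul]; abel
  intro i hi x hx u
  rw [A.leibniz hx, Odd.neg_one_zpow hi, neg_one_smul, sub_eq_add_neg]

theorem aux_pos_mul (A : CDGA) : ∀ x ∈ auxPosPart A, ∀ u, x * u ∈ auxPosPart A := by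
  apply auxBiSup_induction
  · simp
  · intro x x' hx hx' y; rw [add_mul]; exact Submodule.add_mem _ (hx y) (hx' y)
  intro i hi x hx
  apply aux_grading_induction
  · simp
  · intro x x' hx hx'; rw [mul_add]; exact Submodule.add_mem _ hx hx'
  intro j y hy
  rcases lt_or_ge j 0 with h | h
  · rw [A.nonneg j h, Submodule.mem_bot] at hy
    simp [hy]
  · have h1 := A.mul_mem hx hy
    exact Submodule.mem_iSup_of_mem (i + j) (Submodule.mem_iSup_of_mem (by omega) h1)

theorem aux_pos_zero (A : CDGA) (x : A.carrier) (h0 : x ∈ A.grading 0) (h1 : x ∈ auxPosPart A) :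
    x = 0 := by
  have h := A.internal.submodule_iSupIndep 0
  rw [Submodule.disjoint_def] at h
  apply h x h0
  refine (iSup_mono fun i => ?_ : auxPosPart A ≤ _) h1
  exact iSup_mono' fun hi => ⟨by omega, le_rfl⟩

theorem aux_odd_pos (A : CDGA) : auxOddPart A ≤ auxPosPart A := by
  apply iSup_le; intro i; apply iSup_le; intro hi
  rcases lt_or_ge i 0 with h | h
  · rw [A.nonneg i h]; exact bot_le
  · have : 0 < i := by
      rcases h.lt_or_eq with h | h
      · exact h
      · subst h; simp at hi
    exact le_iSup_of_le i (le_iSup_of_le this le_rfl)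

/-- The graded summands of complementary graded subspaces have disjoint sums. -/
theorem aux_disjoint (A : CDGA) (Z₀ Z₁ : ℤ → Submodule ℚ A.carrier)
    (h0 : ∀ i, Z₀ i ≤ A.grading i) (h1 : ∀ i, Z₁ i ≤ A.grading i)
    (hd : ∀ i, Z₀ i ⊓ Z₁ i = ⊥) : (⨆ i, Z₀ i) ⊓ (⨆ i, Z₁ i) = ⊥ := by
  classical
  letI := A.internal.chooseDecomposition
  have key : ∀ Z : ℤ → Submodule ℚ A.carrier, (∀ i, Z i ≤ A.grading i) →
      ∀ x ∈ (⨆ i, Z i), ∀ j, (DirectSum.decompose A.grading x j : A.carrier) ∈ Z j := by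
    intro Z hZ x hx j
    induction hx using Submodule.iSup_induction' with
    | mem i x hx =>
      by_cases hij : i = j
      · subst hij
        rw [DirectSum.decompose_of_mem_same _ (hZ i hx)]; exact hx
      · rw [DirectSum.decompose_of_mem_ne _ (hZ i hx) hij]; exact Submodule.zero_mem _
    | zero => simp
    | add x y _ _ hx hy =>
      rw [DirectSum.decompose_add, DirectSum.add_apply]
      exact Submodule.add_mem _ hx hy
  rw [eq_bot_iff]
  rintro x ⟨hx0, hx1⟩
  have hz : DirectSum.decompose A.grading x = 0 := by
    ext j
    have : (DirectSum.decompose A.grading x j : A.carrier) ∈ Z₀ j ⊓ Z₁ j :=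
      ⟨key Z₀ h0 x hx0 j, key Z₁ h1 x hx1 j⟩
    rw [hd] at this
    simpa using this
  have := congrArg (DirectSum.decompose A.grading).symm hz
  simpa using this

/-- The elements `z` with `z N ⊆ N`, as a `ℚ`-subspace. -/
def auxStab {P A : Type} [CommRing P] [Ring A] [Algebra P A] [Algebra ℚ A] [Algebra ℚ P]
    [IsScalarTower ℚ P A] (N : Submodule P A) : Submodule ℚ A where
  carrier := {z | ∀ n ∈ N, z * n ∈ N}
  zero_mem' := by intro n _; rw [zero_mul]; exact N.zero_mem
  add_mem' := by intro x y hx hy n hn; rw [add_mul]; exact N.add_mem (hx n hn) (hy n hn)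
  smul_mem' := by
    intro c x hx n hn
    rw [smul_mul_assoc, ← algebraMap_smul P c]
    exact N.smul_mem _ (hx n hn)

section
variable {A : Type} [Ring A] [Algebra ℚ A] {ι : Type} 
    (deg : ι → ℤ) (g : ι → A)
    [Algebra (MvPolynomial {x : ι // Even (deg x)} ℚ) A]
    [IsScalarTower ℚ (MvPolynomial {x : ι // Even (deg x)} ℚ) A]

theorem aux_algebraMap_C (c : ℚ) :
    algebraMap (MvPolynomial {x : ι // Even (deg x)} ℚ) A (MvPolynomial.C c) = algebraMap ℚ A c := by
  rw [← MvPolynomial.algebraMap_eq, ← IsScalarTower.algebraMap_apply]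

theorem aux_P_mem
    (hX : ∀ x : {x : ι // Even (deg x)},
      algebraMap (MvPolynomial {x : ι // Even (deg x)} ℚ) A (MvPolynomial.X x) = g x)
    (S : Subalgebra ℚ A) (hS : ∀ x, Even (deg x) → g x ∈ S)
    (p : MvPolynomial {x : ι // Even (deg x)} ℚ) :
    algebraMap (MvPolynomial {x : ι // Even (deg x)} ℚ) A p ∈ S := by
  induction p using MvPolynomial.induction_on with
  | C c => rw [aux_algebraMap_C]; exact S.algebraMap_mem c
  | add p q hp hq => rw [map_add]; exact S.add_mem hp hq
  | mul_X p x hp => rw [map_mul, hX]; exact S.mul_mem hp (hS x x.2)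

theorem aux_P_smul
    (N : Submodule (MvPolynomial {x : ι // Even (deg x)} ℚ) A)
    (hX : ∀ x : {x : ι // Even (deg x)},
      algebraMap (MvPolynomial {x : ι // Even (deg x)} ℚ) A (MvPolynomial.X x) = g x)
    (x : ι) (hx : Even (deg x)) : g x ∈ auxStab N := by
  intro n hn
  rw [← hX ⟨x, hx⟩, ← Algebra.smul_def]
  exact N.smul_mem _ hn

end

theorem aux_monomialIn_single {A : Type} [Ring A] {ι : Type} (lo : LinearOrder ι) (g : ι → A)
    (x : ι) : monomialIn lo g (Finsupp.single x 1) = g x := by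
  unfold monomialIn
  rw [Finsupp.support_single_ne_zero _ one_ne_zero]
  simp

theorem aux_g_indep {A : Type} [Ring A] [Algebra ℚ A] {ι : Type} (lo : LinearOrder ι)
    (deg : ι → ℤ) (g : ι → A)
    (hLI : LinearIndependent ℚ
      (fun e : {e : ι →₀ ℕ // ∀ x : ι, Odd (deg x) → e x ≤ 1} => monomialIn lo g e.1)) :
    LinearIndependent ℚ g := by
  classical
  let em : ι → {e : ι →₀ ℕ // ∀ x : ι, Odd (deg x) → e x ≤ 1} := fun x =>
    ⟨Finsupp.single x 1, fun y _ => by rw [Finsupp.single_apply]; split_ifs <;> omega⟩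
  have hem : Function.Injective em := by
    intro x y h
    exact Finsupp.single_left_injective one_ne_zero (congrArg Subtype.val h)
  have := hLI.comp em hem
  convert this using 1
  funext x
  exact (aux_monomialIn_single lo g x).symm

theorem aux_monomial_mem {A : Type} [Ring A] [Algebra ℚ A] {ι : Type} (lo : LinearOrder ι)
    (g : ι → A) (S : Subalgebra ℚ A) (hS : ∀ x, g x ∈ S) (e : ι →₀ ℕ) : monomialIn lo g e ∈ S := by
  unfold monomialIn
  apply Subalgebra.list_prod_mem
  intro z hz
  obtain ⟨x, _, rfl⟩ := List.mem_map.1 hz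
  exact S.pow_mem (hS x) _

theorem aux_adjoin_top {A : Type} [Ring A] [Algebra ℚ A] {ι : Type} (lo : LinearOrder ι)
    (deg : ι → ℤ) (g : ι → A)
    (hspan : ⊤ ≤ Submodule.span ℚ
      (Set.range fun e : {e : ι →₀ ℕ // ∀ x : ι, Odd (deg x) → e x ≤ 1} =>
        monomialIn lo g e.1)) (z : A) : z ∈ Algebra.adjoin ℚ (Set.range g) := by
  have h := hspan (Submodule.mem_top : z ∈ ⊤)
  have h2 : Submodule.span ℚ (Set.range fun e : {e : ι →₀ ℕ // ∀ x : ι, Odd (deg x) → e x ≤ 1} =>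
        monomialIn lo g e.1) ≤ Subalgebra.toSubmodule (Algebra.adjoin ℚ (Set.range g)) := by
    rw [Submodule.span_le]
    rintro _ ⟨e, rfl⟩
    exact aux_monomial_mem lo g _ (fun x => Algebra.subset_adjoin (Set.mem_range_self x)) _
  exact h2 h

theorem aux_V_sub (A : SullivanAlgebra) (Z₀ Z₁ : ℤ → Submodule ℚ A.carrier)
    (hsplit₂ : ∀ i : ℤ, Z₀ i ⊔ Z₁ i = A.V i) (i : ℤ) :
    Z₀ i ≤ A.V i ∧ Z₁ i ≤ A.V i := by
  rw [← hsplit₂]; exact ⟨le_sup_left, le_sup_right⟩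

theorem aux_even_eq (A : SullivanAlgebra) (Z₀ Z₁ : ℤ → Submodule ℚ A.carrier)
    (hsplit₂ : ∀ i : ℤ, Z₀ i ⊔ Z₁ i = A.V i)
    (hZ₁odd : ∀ i : ℤ, Even i → Z₁ i = ⊥) (i : ℤ) (hi : Even i) : Z₀ i = A.V i := by
  rw [← hsplit₂, hZ₁odd i hi, sup_bot_eq]

/-- The count of odd generators. -/
theorem aux_count (A : SullivanAlgebra) {ι : Type} [Fintype ι] (deg : ι → ℤ) (g : ι → A.carrier)
    (hV : ∀ i : ℤ, A.V i = Submodule.span ℚ (g '' {x : ι | deg x = i}))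
    (hg : LinearIndependent ℚ g)
    (Z₀ Z₁ : ℤ → Submodule ℚ A.carrier)
    (hsplit₁ : ∀ i : ℤ, Z₀ i ⊓ Z₁ i = ⊥)
    (hsplit₂ : ∀ i : ℤ, Z₀ i ⊔ Z₁ i = A.V i)
    (hZ₁odd : ∀ i : ℤ, Even i → Z₁ i = ⊥)
    (k : ℕ) (b : Fin k → A.carrier)
    (hbLI : LinearIndependent ℚ b)
    (hbspan : Submodule.span ℚ (Set.range b) = ⨆ i : ℤ, Z₁ i) :
    FiniteDimensional ℚ ↥(⨆ i : ℤ, ⨆ _ : Odd i, Z₀ i) ∧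
    Nat.card {x : ι // ¬ Even (deg x)} =
      Module.finrank ℚ ↥(⨆ i : ℤ, ⨆ _ : Odd i, Z₀ i) + k := by
  classical
  set W0 := ⨆ i : ℤ, ⨆ _ : Odd i, Z₀ i with hW0
  set go : {x : ι // ¬ Even (deg x)} → A.carrier := fun x => g x with hgo
  have hsup : W0 ⊔ Submodule.span ℚ (Set.range b) = Submodule.span ℚ (Set.range go) := by
    apply le_antisymm
    · apply sup_le
      · apply iSup_le; intro i; apply iSup_le; intro hi
        refine (aux_V_sub A Z₀ Z₁ hsplit₂ i).1.trans ?_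
        rw [hV]
        apply Submodule.span_mono
        rintro _ ⟨x, hx, rfl⟩
        have hx : deg x = i := hx
        exact ⟨⟨x, by rw [hx]; simpa using hi⟩, rfl⟩
      · rw [hbspan]
        apply iSup_le; intro i
        by_cases hi : Even i
        · rw [hZ₁odd i hi]; exact bot_le
        refine (aux_V_sub A Z₀ Z₁ hsplit₂ i).2.trans ?_
        rw [hV]
        apply Submodule.span_mono
        rintro _ ⟨x, hx, rfl⟩
        have hx : deg x = i := hx
        exact ⟨⟨x, by rw [hx]; exact hi⟩, rfl⟩
    · rw [Submodule.span_le]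
      rintro _ ⟨⟨x, hx⟩, rfl⟩
      have h1 : g x ∈ A.V (deg x) := by
        rw [hV]; exact Submodule.subset_span ⟨x, rfl, rfl⟩
      rw [← hsplit₂] at h1
      rw [hbspan]
      refine (sup_le_sup ?_ ?_ : Z₀ (deg x) ⊔ Z₁ (deg x) ≤ _) h1
      · exact le_iSup_of_le (deg x) (le_iSup_of_le (by simpa using hx) le_rfl)
      · exact le_iSup _ _
  have hfo : FiniteDimensional ℚ (Submodule.span ℚ (Set.range go)) :=
    FiniteDimensional.span_of_finite ℚ (Set.finite_range go)
  have hf0 : FiniteDimensional ℚ W0 := by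
    apply Submodule.finiteDimensional_of_le (S₂ := Submodule.span ℚ (Set.range go))
    rw [← hsup]; exact le_sup_left
  have hfb : FiniteDimensional ℚ (Submodule.span ℚ (Set.range b)) :=
    FiniteDimensional.span_of_finite ℚ (Set.finite_range b)
  refine ⟨hf0, ?_⟩
  have hdis : W0 ⊓ Submodule.span ℚ (Set.range b) = ⊥ := by
    have := aux_disjoint A.toCDGA Z₀ Z₁
      (fun i => (aux_V_sub A Z₀ Z₁ hsplit₂ i).1.trans (A.V_le i))
      (fun i => (aux_V_sub A Z₀ Z₁ hsplit₂ i).2.trans (A.V_le i)) hsplit₁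
    rw [eq_bot_iff, ← this, hbspan]
    apply inf_le_inf_right
    exact iSup_mono fun i => iSup_le fun _ => le_rfl
  have h := Submodule.finrank_sup_add_finrank_inf_eq W0 (Submodule.span ℚ (Set.range b))
  rw [hsup, hdis, finrank_bot, add_zero, finrank_span_eq_card hbLI, Fintype.card_fin,
    finrank_span_eq_card (b := go) (hg.comp _ Subtype.val_injective)] at h
  rw [Nat.card_eq_fintype_card]; exact h

/-- The polynomial part consists of cocycles, and has no positive part except constants. -/
theorem aux_dP (A : SullivanAlgebra) {ι : Type} (deg : ι → ℤ) (g : ι → A.carrier)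
    [Algebra (MvPolynomial {x : ι // Even (deg x)} ℚ) A.carrier]
    [IsScalarTower ℚ (MvPolynomial {x : ι // Even (deg x)} ℚ) A.carrier]
    (hX : ∀ x : {x : ι // Even (deg x)},
      algebraMap (MvPolynomial {x : ι // Even (deg x)} ℚ) A.carrier (MvPolynomial.X x) = g x)
    (hg1 : ∀ x : ι, g x ∈ A.V (deg x))
    (hd : ∀ x, Even (deg x) → A.d (g x) = 0)
    (p : MvPolynomial {x : ι // Even (deg x)} ℚ) :
    A.d (algebraMap (MvPolynomial {x : ι // Even (deg x)} ℚ) A.carrier p) = 0 := by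
  induction p using MvPolynomial.induction_on with
  | C c => rw [aux_algebraMap_C, Algebra.algebraMap_eq_smul_one, map_smul, aux_d_one, smul_zero]
  | add p q hp hq => rw [map_add, map_add, hp, hq, add_zero]
  | mul_X p x hp =>
    rw [mul_comm, map_mul, hX, A.leibniz (A.V_le _ (hg1 x)), hp, hd x x.2]
    simp

theorem aux_P_pos (A : SullivanAlgebra) {ι : Type} (deg : ι → ℤ) (g : ι → A.carrier)
    [Algebra (MvPolynomial {x : ι // Even (deg x)} ℚ) A.carrier]
    [IsScalarTower ℚ (MvPolynomial {x : ι // Even (deg x)} ℚ) A.carrier]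
    (hX : ∀ x : {x : ι // Even (deg x)},
      algebraMap (MvPolynomial {x : ι // Even (deg x)} ℚ) A.carrier (MvPolynomial.X x) = g x)
    (hg1 : ∀ x : ι, g x ∈ A.V (deg x))
    (hpos : ∀ x, 0 < deg x)
    (p : MvPolynomial {x : ι // Even (deg x)} ℚ) :
    algebraMap (MvPolynomial {x : ι // Even (deg x)} ℚ) A.carrier p -
      algebraMap ℚ A.carrier (MvPolynomial.constantCoeff p) ∈ auxPosPart A.toCDGA := by
  induction p using MvPolynomial.induction_on with
  | C c => rw [aux_algebraMap_C]; simp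
  | add p q hp hq =>
    rw [map_add, map_add, map_add, add_sub_add_comm]; exact Submodule.add_mem _ hp hq
  | mul_X p x hp =>
    rw [mul_comm, map_mul, map_mul, hX, MvPolynomial.constantCoeff_X, zero_mul, map_zero, sub_zero]
    apply aux_pos_mul
    exact Submodule.mem_iSup_of_mem (deg x)
      (Submodule.mem_iSup_of_mem (hpos x) (A.V_le _ (hg1 x)))

theorem aux_V_zero (A : SullivanAlgebra) (i : ℤ) (x : A.carrier) (hx : x ∈ A.V i) (h0 : x ≠ 0) :
    2 ≤ i := by
  by_contra h
  rw [A.V_lower i (by omega), Submodule.mem_bot] at hx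
  exact h0 hx

/-- The main argument, once the polynomial algebra structure is in place. -/
theorem aux_main (A : SullivanAlgebra)
    (hfinH : FiniteDimensional ℚ A.toCDGA.Hspace)
    {ι : Type} [Fintype ι] (lo : LinearOrder ι) (deg : ι → ℤ) (g : ι → A.carrier)
    [Algebra (MvPolynomial {x : ι // Even (deg x)} ℚ) A.carrier]
    [IsScalarTower ℚ (MvPolynomial {x : ι // Even (deg x)} ℚ) A.carrier]
    (hX : ∀ x : {x : ι // Even (deg x)},
      algebraMap (MvPolynomial {x : ι // Even (deg x)} ℚ) A.carrier (MvPolynomial.X x) = g x)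
    (hg1 : ∀ x : ι, g x ∈ A.V (deg x))
    (hV : ∀ i : ℤ, A.V i = Submodule.span ℚ (g '' {x : ι | deg x = i}))
    (hLI : LinearIndependent ℚ
      (fun e : {e : ι →₀ ℕ // ∀ x : ι, Odd (deg x) → e x ≤ 1} => monomialIn lo g e.1))
    (hspan : ⊤ ≤ Submodule.span ℚ
      (Set.range fun e : {e : ι →₀ ℕ // ∀ x : ι, Odd (deg x) → e x ≤ 1} =>
        monomialIn lo g e.1))
    (Z₀ Z₁ : ℤ → Submodule ℚ A.carrier)
    (hsplit₁ : ∀ i : ℤ, Z₀ i ⊓ Z₁ i = ⊥)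
    (hsplit₂ : ∀ i : ℤ, Z₀ i ⊔ Z₁ i = A.V i)
    (hZ₁odd : ∀ i : ℤ, Even i → Z₁ i = ⊥)
    (hdZ₀ : ∀ i : ℤ, ∀ x ∈ Z₀ i, A.d x = 0)
    (k : ℕ) (b : Fin k → A.carrier) (degb : Fin k → ℤ)
    (hb : ∀ j : Fin k, b j ∈ Z₁ (degb j))
    (hbLI : LinearIndependent ℚ b)
    (hbspan : Submodule.span ℚ (Set.range b) = ⨆ i : ℤ, Z₁ i)
    (a : Fin k → ↥(Algebra.adjoin ℚ (⋃ i' : ℤ, (Z₀ i' : Set A.carrier))))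
    (ha : ∀ j : Fin k, (a j : A.carrier) = A.d (b j))
    (hreg : IsRegularSeq a) :
    (k = Fintype.card {x : ι // Even (deg x)}) ∧
    ∀ abar : Fin k →
        ↥(Algebra.adjoin ℚ {x : A.carrier | ∃ i : ℤ, Even i ∧ x ∈ Z₀ i}),
      (∀ j : Fin k, (a j : A.carrier) - (abar j : A.carrier) ∈
        Ideal.span {x : A.carrier | ∃ i : ℤ, Odd i ∧ x ∈ Z₀ i}) →
      IsRegularSeq abar := by
  classical
  set P := MvPolynomial {x : ι // Even (deg x)} ℚ with hP
  have hg := aux_g_indep lo deg g hLI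
  obtain ⟨hfW, hcount⟩ := aux_count A deg g hV hg Z₀ Z₁ hsplit₁ hsplit₂ hZ₁odd k b hbLI hbspan
  set W0 : Submodule ℚ A.carrier := ⨆ i : ℤ, ⨆ _ : Odd i, Z₀ i with hW0
  set m := Module.finrank ℚ W0 with hm
  let y := Module.finBasis ℚ W0
  have hpos : ∀ x, 0 < deg x := fun x => by
    have := aux_V_zero A _ _ (hg1 x) (hg.ne_zero x); omega
  have hZ0g : ∀ i, Z₀ i ≤ A.grading i := fun i => (aux_V_sub A Z₀ Z₁ hsplit₂ i).1.trans (A.V_le i)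
  have hZ1g : ∀ i, Z₁ i ≤ A.grading i := fun i => (aux_V_sub A Z₀ Z₁ hsplit₂ i).2.trans (A.V_le i)
  have hdegb : ∀ j, Odd (degb j) ∧ 2 ≤ degb j := by
    intro j
    refine ⟨?_, aux_V_zero A _ _ ((aux_V_sub A Z₀ Z₁ hsplit₂ _).2 (hb j)) (hbLI.ne_zero j)⟩
    rw [← Int.not_even_iff_odd]
    intro h
    have := hb j
    rw [hZ₁odd _ h, Submodule.mem_bot] at this
    exact hbLI.ne_zero j this
  have hW0odd : W0 ≤ auxOddPart A.toCDGA := iSup_mono fun i => iSup_mono fun _ => hZ0g i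
  have hbodd : ∀ j, b j ∈ auxOddPart A.toCDGA := fun j =>
    Submodule.mem_iSup_of_mem (degb j) (Submodule.mem_iSup_of_mem (hdegb j).1 (hZ1g _ (hb j)))
  have hdW0 : ∀ x ∈ W0, A.d x = 0 := by
    apply auxBiSup_induction
    · simp
    · intro x y hx hy; rw [map_add, hx, hy, add_zero]
    · intro i _ x hx; exact hdZ₀ i x hx
  -- the odd generators
  let w : ℕ → A.carrier := fun i =>
    if h : i < m then (y ⟨i, h⟩ : A.carrier) else if h : i - m < k then b ⟨i - m, h⟩ else 0
  have hwy : ∀ i (h : i < m), w i = y ⟨i, h⟩ := fun i h => by simp [w, h]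
  have hwb : ∀ j (h : j < k), w (m + j) = b ⟨j, h⟩ := fun j h => by simp [w, h]
  have hwodd : ∀ i, w i ∈ auxOddPart A.toCDGA := by
    intro i
    simp only [w]
    split_ifs with h1 h2
    · exact hW0odd (y _).2
    · exact hbodd _
    · exact Submodule.zero_mem _
  have hanti : ∀ i j, w i * w j = -(w j * w i) := fun i j =>
    aux_anticomm _ _ (hwodd i) _ (hwodd j)
  have hsq : ∀ i, w i * w i = 0 := fun i => aux_sq _ _ (hwodd i)
  have hW0span : W0 ≤ Submodule.span ℚ (w '' {i | i < m}) := by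
    intro x hx
    have h1 := congrArg Subtype.val (y.sum_repr ⟨x, hx⟩)
    have h2 : x = ∑ i, y.repr ⟨x, hx⟩ i • (y i : A.carrier) := by
      exact h1.symm.trans (AddSubmonoidClass.coe_finsetSum _ _)
    rw [h2]
    apply Submodule.sum_mem
    intro i _
    apply Submodule.smul_mem
    exact Submodule.subset_span ⟨i, i.2, hwy i i.2⟩
  -- stabilizers
  have hst_even : ∀ (N : Submodule P A.carrier) (i : ℤ), Even i → A.V i ≤ auxStab N := by
    intro N i hi
    rw [hV, Submodule.span_le]
    rintro _ ⟨x, hx, rfl⟩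
    have hx : deg x = i := hx
    exact aux_P_smul deg g N hX x (by rw [hx]; exact hi)
  have hst_w : ∀ s, ∀ i < s, w i ∈ auxStab (auxN P w s) := fun s i hi n hn =>
    auxN_mul_mem w hanti hsq s i hi n hn
  have hst_W0 : ∀ s, m ≤ s → W0 ≤ auxStab (auxN P w s) := by
    intro s hs
    refine hW0span.trans (Submodule.span_le.2 ?_)
    rintro _ ⟨i, hi, rfl⟩
    exact hst_w s i (lt_of_lt_of_le hi hs)
  have hst_Z0 : ∀ s, m ≤ s → ∀ i, Z₀ i ≤ auxStab (auxN P w s) := by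
    intro s hs i
    by_cases hi : Even i
    · exact (aux_V_sub A Z₀ Z₁ hsplit₂ i).1.trans (hst_even _ i hi)
    · refine le_trans ?_ (hst_W0 s hs)
      exact le_iSup_of_le i (le_iSup_of_le (by simpa using hi) le_rfl)
  have hst_b : (Submodule.span ℚ (Set.range b)) ≤ auxStab (auxN P w (m + k)) := by
    rw [Submodule.span_le]
    rintro _ ⟨j, rfl⟩
    have := hst_w (m + k) (m + j) (by omega)
    rwa [hwb j j.2] at this
  have htop : auxN P w (m + k) = ⊤ := by
    rw [eq_top_iff]
    intro z _
    refine auxN_adjoin (K := ℚ) _ (auxN_one w _) (Set.range g) ?_ z (aux_adjoin_top lo deg g hspan z)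
    rintro _ ⟨x, rfl⟩
    have h1 := hg1 x
    rw [← hsplit₂] at h1
    refine (sup_le (hst_Z0 (m + k) (by omega) _) ?_ : _ ≤ auxStab (auxN P w (m + k))) h1
    refine le_trans ?_ hst_b
    rw [hbspan]; exact le_iSup _ _
  have hind : LinearIndependent P (auxMon w (m + k)) :=
    aux_new_indep lo deg g hX hLI w (m + k) hcount htop
  have hI := auxMon_indep w (m + k) hind
  have hinj := aux_algebraMap_inj w (m + k) hind
  have hN0 : ∀ x, x ∈ auxN P w 0 ↔ ∃ p, algebraMap P A.carrier p = x := by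
    intro x
    rw [auxN, Submodule.mem_span_singleton]
    simp only [Algebra.smul_def, mul_one]
  have hPE : ∀ p : P, algebraMap P A.carrier p ∈
      Algebra.adjoin ℚ {x : A.carrier | ∃ i : ℤ, Even i ∧ x ∈ Z₀ i} := by
    apply aux_P_mem deg g hX
    intro x hx
    apply Algebra.subset_adjoin
    exact ⟨deg x, hx, by rw [aux_even_eq A Z₀ Z₁ hsplit₂ hZ₁odd _ hx]; exact hg1 x⟩
  have hPZ : ∀ p : P, algebraMap P A.carrier p ∈
      Algebra.adjoin ℚ (⋃ i' : ℤ, (Z₀ i' : Set A.carrier)) := by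
    apply aux_P_mem deg g hX
    intro x hx
    apply Algebra.subset_adjoin
    exact Set.mem_iUnion.2 ⟨deg x, by
      rw [aux_even_eq A Z₀ Z₁ hsplit₂ hZ₁odd _ hx]; exact hg1 x⟩
  have hE : ∀ x ∈ Algebra.adjoin ℚ {x : A.carrier | ∃ i : ℤ, Even i ∧ x ∈ Z₀ i},
      x ∈ auxN P w 0 := by
    apply auxN_adjoin _ (auxN_one w _)
    rintro z ⟨i, hi, hz⟩
    exact hst_even _ i hi ((aux_V_sub A Z₀ Z₁ hsplit₂ i).1 hz)
  have hZ : ∀ x, x ∈ auxN P w m ↔ x ∈ Algebra.adjoin ℚ (⋃ i' : ℤ, (Z₀ i' : Set A.carrier)) := by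
    intro x
    constructor
    · apply auxN_le_subalgebra w _ hPZ
      intro i hi
      have h1 : w i ∈ W0 := by rw [hwy i hi]; exact (y _).2
      refine (?_ : W0 ≤ Subalgebra.toSubmodule (Algebra.adjoin ℚ
        (⋃ i' : ℤ, (Z₀ i' : Set A.carrier)))) h1
      apply iSup_le; intro i; apply iSup_le; intro _ z hz
      exact Algebra.subset_adjoin (Set.mem_iUnion.2 ⟨i, hz⟩)
    · apply auxN_adjoin _ (auxN_one w _)
      intro z hz
      obtain ⟨i, hz⟩ := Set.mem_iUnion.1 hz
      exact hst_Z0 m le_rfl i hz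
  -- the sequence `a`
  let a' : ℕ → A.carrier := fun i => if h : i < k then (a ⟨i, h⟩ : A.carrier) else 0
  have ha' : ∀ j : Fin k, a' j = a j := fun j => by simp [a']
  have hadeg : ∀ j, (a j : A.carrier) ∈ A.grading (degb j + 1) := fun j => by
    rw [ha]; exact A.d_mem (hZ1g _ (hb j))
  have hcent : ∀ i x, a' i * x = x * a' i := by
    intro i x
    by_cases h : i < k
    · rw [ha' ⟨i, h⟩]
      exact aux_central _ _ ((hdegb _).1.add_one) _ (hadeg ⟨i, h⟩) x
    · simp [a', h]
  have haN : ∀ i, a' i ∈ auxN P w m := by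
    intro i
    by_cases h : i < k
    · rw [ha' ⟨i, h⟩, hZ]; exact (a _).2
    · simp [a', h]
  have haM : ∀ i, ∀ x ∈ auxN P w m, a' i * x ∈ auxN P w m := by
    intro i x hx
    rw [hZ] at hx ⊢
    exact Subalgebra.mul_mem _ ((hZ _).1 (haN i)) hx
  have hreg' : auxReg k (fun i => LinearMap.mulLeft P (a' i)) (auxN P w m) := by
    refine (auxRegSeq_iff (Algebra.adjoin ℚ (⋃ i' : ℤ, (Z₀ i' : Set A.carrier))).val.toRingHom
      Subtype.val_injective _ ?_ k a a' ha' hcent).1 hreg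
    intro x
    rw [hZ]
    exact ⟨fun h => ⟨⟨x, h⟩, rfl⟩, by rintro ⟨s, rfl⟩; exact s.2⟩
  have hwpos : ∀ i u, w i * u ∈ (auxPosPart A.toCDGA).toAddSubgroup := fun i u =>
    aux_pos_mul _ _ (aux_odd_pos _ (hwodd i)) u
  constructor
  · have hred : ∀ i, ∃ p : P, MvPolynomial.constantCoeff p = 0 ∧
        auxOm w 0 m * a' i = auxOm w 0 m * algebraMap P A.carrier p := by
      intro i
      obtain ⟨p, hp1, hp2⟩ := aux_reduce w hanti hsq m _ hwpos m le_rfl _ (haN i)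
      refine ⟨p, ?_, hp2⟩
      have h1 : a' i ∈ auxPosPart A.toCDGA := by
        by_cases h : i < k
        · rw [ha' ⟨i, h⟩]
          exact Submodule.mem_iSup_of_mem (degb ⟨i, h⟩ + 1)
            (Submodule.mem_iSup_of_mem (by have := (hdegb ⟨i, h⟩).2; omega) (hadeg _))
        · simp [a', h]
      have h2 := aux_P_pos A deg g hX hg1 hpos p
      have h3 : algebraMap ℚ A.carrier (MvPolynomial.constantCoeff p) ∈ auxPosPart A.toCDGA := by
        have := Submodule.sub_mem _ (Submodule.sub_mem _ h1 hp1) h2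
        convert this using 1
        abel
      have h4 := aux_pos_zero A.toCDGA _ (by
        rw [Algebra.algebraMap_eq_smul_one]
        exact Submodule.smul_mem _ _ A.one_mem) h3
      rw [← aux_algebraMap_C deg] at h4
      have h5 := (injective_iff_map_eq_zero _).1 hinj _ h4
      exact (MvPolynomial.C_eq_zero).1 h5
    choose f hf0 hf using hred
    have hregf := auxReg_base w hanti hsq (m + k) hI m (by omega) k a' hcent haM hreg' f hf
    have hregF : IsRegularSeq (fun j : Fin k => f j) :=
      (auxRegSeq_iff (algebraMap P A.carrier) hinj _ hN0 k (fun j : Fin k => f j)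
        (fun i => algebraMap P A.carrier (f i)) (fun j => rfl)
        (fun i x => Algebra.commutes _ _)).2 hregf
    refine aux_krull k (fun j : Fin k => f j) (fun j => hf0 j) hregF ?_
    have hdP := aux_dP A deg g hX hg1 (fun x hx => hdZ₀ (deg x) _ (by
      rw [aux_even_eq A Z₀ Z₁ hsplit₂ hZ₁odd _ hx]; exact hg1 x))
    have hrange : f '' {j | j < k} = Set.range (fun j : Fin k => f j) := by
      ext p
      constructor
      · rintro ⟨j, hj, rfl⟩; exact ⟨⟨j, hj⟩, rfl⟩
      · rintro ⟨j, rfl⟩; exact ⟨j, j.2, rfl⟩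
    have hbdry : ∀ p z, A.d z = algebraMap P A.carrier p →
        p ∈ Ideal.span (Set.range (fun j : Fin k => f j)) := by
      rw [← hrange]
      refine fun p z hz => aux_boundary w hanti hsq m k hind htop A.d (map_add _) hdP
        (fun i u => aux_d_odd _ _ (hwodd i) u) ?_ a' hcent ?_ f hf p z hz
      · intro i hi; rw [hwy i hi]; exact hdW0 _ (y _).2
      · intro j hj; rw [hwb j hj, ha' ⟨j, hj⟩, ha]
    let Φ0 : P →ₗ[ℚ] LinearMap.ker A.d :=
      LinearMap.codRestrict _ (IsScalarTower.toAlgHom ℚ P A.carrier).toLinearMap hdP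
    let Φ : P →ₗ[ℚ] A.toCDGA.Hspace := (Submodule.mkQ _).comp Φ0
    set I := Ideal.span (Set.range (fun j : Fin k => f j)) with hIdef
    have hker : LinearMap.ker Φ ≤ LinearMap.ker (Ideal.Quotient.mkₐ ℚ I).toLinearMap := by
      intro p hp
      have h1 : Φ0 p ∈ (LinearMap.range A.d).comap (LinearMap.ker A.d).subtype :=
        (Submodule.Quotient.mk_eq_zero _).1 hp
      obtain ⟨z, hz⟩ := h1
      exact Ideal.Quotient.eq_zero_iff_mem.2 (hbdry p z hz)
    have hfd : FiniteDimensional ℚ (P ⧸ LinearMap.ker Φ) :=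
      Module.Finite.equiv Φ.quotKerEquivRange.symm
    refine Module.Finite.of_surjective
      (Submodule.liftQ (LinearMap.ker Φ) (Ideal.Quotient.mkₐ ℚ I).toLinearMap hker) ?_
    intro q
    obtain ⟨p, rfl⟩ := Ideal.Quotient.mk_surjective q
    exact ⟨Submodule.Quotient.mk p, rfl⟩
  · intro abar habar
    have hex : ∀ j : Fin k, ∃ p : P, algebraMap P A.carrier p = abar j := fun j =>
      (hN0 _).1 (hE _ (abar j).2)
    choose F hF using hex
    let f : ℕ → P := fun i => if h : i < k then F ⟨i, h⟩ else 0
    have hfF : ∀ j : Fin k, f j = F j := fun j => by simp [f]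
    have hW0om : ∀ x ∈ W0, x * auxOm w 0 m = 0 := by
      intro x hx0
      have hx := hW0span hx0
      clear hx0
      induction hx using Submodule.span_induction with
      | mem x hx =>
        obtain ⟨i, hi, rfl⟩ := hx
        exact (auxOm_mul_zero w hanti hsq i 0 m (by omega) (by simpa using hi)).2
      | zero => simp
      | add x y _ _ hx hy => rw [add_mul, hx, hy, add_zero]
      | smul c x _ hx => rw [smul_mul_assoc, hx, smul_zero]
    have hidl : ∀ x ∈ Ideal.span {x : A.carrier | ∃ i : ℤ, Odd i ∧ x ∈ Z₀ i},
        x * auxOm w 0 m = 0 := by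
      intro x hx
      induction hx using Submodule.span_induction with
      | mem x hx =>
        obtain ⟨i, hi, hx⟩ := hx
        exact hW0om x (Submodule.mem_iSup_of_mem i (Submodule.mem_iSup_of_mem hi hx))
      | zero => simp
      | add x y _ _ hx hy => rw [add_mul, hx, hy, add_zero]
      | smul c x _ hx => rw [smul_eq_mul, mul_assoc, hx, mul_zero]
    have hf : ∀ i, auxOm w 0 m * a' i = auxOm w 0 m * algebraMap P A.carrier (f i) := by
      intro i
      by_cases h : i < k
      · have h1 := hidl _ (habar ⟨i, h⟩)
        rw [sub_mul, sub_eq_zero] at h1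
        rw [← hcent, ← Algebra.commutes, ha' ⟨i, h⟩, hfF ⟨i, h⟩, hF, h1]
      · simp [a', f, h]
    have hregf := auxReg_base w hanti hsq (m + k) hI m (by omega) k a' hcent haM hreg' f hf
    refine (auxRegSeq_iff (Algebra.adjoin ℚ
      {x : A.carrier | ∃ i : ℤ, Even i ∧ x ∈ Z₀ i}).val.toRingHom
      Subtype.val_injective _ ?_ k abar (fun i => algebraMap P A.carrier (f i)) ?_
      (fun i x => Algebra.commutes _ _)).2 hregf
    · intro x
      constructor
      · intro h
        obtain ⟨p, rfl⟩ := (hN0 x).1 h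
        exact ⟨⟨_, hPE p⟩, rfl⟩
      · rintro ⟨s, rfl⟩; exact hE _ s.2
    · intro j
      show algebraMap P A.carrier (f j) = (abar j : A.carrier)
      rw [hfF, hF]

theorem aux_finite (A : SullivanAlgebra) (N : ℤ) (hN : ∀ i : ℤ, N ≤ i → A.V i = ⊥)
    {ι : Type} (deg : ι → ℤ) (g : ι → A.carrier)
    (hg1 : ∀ x : ι, g x ∈ A.V (deg x))
    (hg : LinearIndependent ℚ g) : Finite ι := by
  have hrange : ∀ x, deg x ∈ Set.Ico 2 N := by
    intro x
    refine ⟨aux_V_zero A _ _ (hg1 x) (hg.ne_zero x), ?_⟩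
    by_contra h
    have := hg1 x
    rw [hN _ (by omega), Submodule.mem_bot] at this
    exact hg.ne_zero x this
  have hfib : ∀ i, Finite {x : ι // deg x = i} := by
    intro i
    have := A.V_findim i
    have h1 : LinearIndependent ℚ (fun x : {x : ι // deg x = i} =>
        (⟨g x, by have := hg1 x; rwa [x.2] at this⟩ : A.V i)) := by
      apply LinearIndependent.of_comp (A.V i).subtype
      exact hg.comp _ Subtype.val_injective
    exact h1.finite
  have h2 : (⋃ i ∈ Set.Ico 2 N, {x : ι | deg x = i}).Finite :=
    (Set.finite_Ico 2 N).biUnion fun i _ => hfib i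
  rw [← Set.finite_univ_iff]
  apply h2.subset
  intro x _
  exact Set.mem_biUnion (hrange x) rfl

theorem aux_finsum (A : SullivanAlgebra) {ι : Type} [Fintype ι] (deg : ι → ℤ) (g : ι → A.carrier)
    (hV : ∀ i : ℤ, A.V i = Submodule.span ℚ (g '' {x : ι | deg x = i}))
    (hg : LinearIndependent ℚ g)
    (Z₀ Z₁ : ℤ → Submodule ℚ A.carrier)
    (hsplit₂ : ∀ i : ℤ, Z₀ i ⊔ Z₁ i = A.V i)
    (hZ₁odd : ∀ i : ℤ, Even i → Z₁ i = ⊥) :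
    (finsum fun i : ℤ => if Even i then Module.finrank ℚ ↥(Z₀ i) else 0) =
      Fintype.card {x : ι // Even (deg x)} := by
  classical
  have h1 : ∀ i, Even i → Module.finrank ℚ ↥(Z₀ i) =
      (Finset.univ.filter (fun x : {x : ι // Even (deg x)} => deg x = i)).card := by
    intro i hi
    rw [aux_even_eq A Z₀ Z₁ hsplit₂ hZ₁odd i hi, hV]
    have h2 : g '' {x : ι | deg x = i} = Set.range
        (fun x : {x : {x : ι // Even (deg x)} // deg x = i} => g x) := by
      ext z
      constructor
      · rintro ⟨x, hx, rfl⟩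
        have hx : deg x = i := hx
        exact ⟨⟨⟨x, by rw [hx]; exact hi⟩, hx⟩, rfl⟩
      · rintro ⟨x, rfl⟩
        exact ⟨x.1.1, x.2, rfl⟩
    rw [h2, finrank_span_eq_card
      (b := fun x : {x : {x : ι // Even (deg x)} // deg x = i} => g x) (hg.comp (fun x : {x : {x : ι // Even (deg x)} // deg x = i} =>
      (x.1.1 : ι)) (Subtype.val_injective.comp Subtype.val_injective)), Fintype.card_subtype]
  have h3 : (fun i : ℤ => if Even i then Module.finrank ℚ ↥(Z₀ i) else 0) =
      fun i => (Finset.univ.filter (fun x : {x : ι // Even (deg x)} => deg x = i)).card := by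
    funext i
    split_ifs with h
    · exact h1 i h
    · symm
      rw [Finset.card_eq_zero, Finset.filter_eq_empty_iff]
      rintro x _ rfl
      exact h x.2
  rw [h3, finsum_eq_sum_of_support_subset (s := Finset.univ.image
    (fun x : {x : ι // Even (deg x)} => deg x))]
  · rw [← Finset.card_univ]
    symm
    apply Finset.card_eq_sum_card_fiberwise
    intro x _
    simp
  · intro i hi
    have hi : (Finset.univ.filter
      (fun x : {x : ι // Even (deg x)} => deg x = i)).card ≠ 0 := hi
    obtain ⟨x, hx⟩ := Finset.card_pos.1 (Nat.pos_of_ne_zero hi)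
    simp only [Finset.mem_filter] at hx
    simp only [Finset.coe_image, Set.mem_image]
    exact ⟨x, by simp, hx.2⟩

/-- The map from the polynomial algebra to the centre. -/
noncomputable def auxCenterMap (A : SullivanAlgebra) {ι : Type} (deg : ι → ℤ) (g : ι → A.carrier)
    (hg1 : ∀ x : ι, g x ∈ A.V (deg x)) :
    MvPolynomial {x : ι // Even (deg x)} ℚ →ₐ[ℚ] Subalgebra.center ℚ A.carrier :=
  MvPolynomial.aeval (fun x => ⟨g x, by
    rw [Subalgebra.mem_center_iff]
    exact fun z => (aux_central A.toCDGA _ x.2 _ (A.V_le _ (hg1 x)) z).symm⟩)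

/-- **Regular sequences in two-stage elliptic Sullivan algebras**
(from the proof of Proposition 4.2): let `(ΛZ, D)` be an elliptic Sullivan
algebra with `Z = Z_0 ⊕ Z_1`, `D(Z_0) = 0`, `Z_1` concentrated in odd degrees,
and `D` mapping a basis of `Z_1` onto a regular sequence `a_1, …, a_k` in
`ΛZ_0`.  Then `k = dim Z_0^even`, and the images `ā_1, …, ā_k` of the `a_i`
under the projection `ΛZ_0 → ΛZ_0^even` (sending `Z_0^odd` to `0`) form a
regular sequence in the polynomial algebra `ΛZ_0^even`. -/
theorem two_stage_elliptic_regular_sequence (A : SullivanAlgebra)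
    (hell : A.Elliptic)
    (Z₀ Z₁ : ℤ → Submodule ℚ A.carrier)
    (hsplit₁ : ∀ i : ℤ, Z₀ i ⊓ Z₁ i = ⊥)
    (hsplit₂ : ∀ i : ℤ, Z₀ i ⊔ Z₁ i = A.V i)
    (hZ₁odd : ∀ i : ℤ, Even i → Z₁ i = ⊥)
    (hdZ₀ : ∀ i : ℤ, ∀ x ∈ Z₀ i, A.d x = 0)
    (hdZ₁ : ∀ i : ℤ, ∀ x ∈ Z₁ i,
      A.d x ∈ Algebra.adjoin ℚ (⋃ i' : ℤ, (Z₀ i' : Set A.carrier)))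
    -- a homogeneous basis `b` of `Z_1` …
    (k : ℕ) (b : Fin k → A.carrier) (degb : Fin k → ℤ)
    (hb : ∀ j : Fin k, b j ∈ Z₁ (degb j))
    (hbLI : LinearIndependent ℚ b)
    (hbspan : Submodule.span ℚ (Set.range b) = ⨆ i : ℤ, Z₁ i)
    -- … which `D` maps onto a regular sequence `a` in `ΛZ_0`
    (a : Fin k → ↥(Algebra.adjoin ℚ (⋃ i' : ℤ, (Z₀ i' : Set A.carrier))))
    (ha : ∀ j : Fin k, (a j : A.carrier) = A.d (b j))
    (hreg : IsRegularSeq a) :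
    -- then `k = dim Z_0^even` …
    (k = finsum fun i : ℤ => if Even i then Module.finrank ℚ ↥(Z₀ i) else 0) ∧
    -- … and the projections `ā_j` of the `a_j` to `ΛZ_0^even` form a regular
    -- sequence in `ΛZ_0^even`
    ∀ abar : Fin k →
        ↥(Algebra.adjoin ℚ {x : A.carrier | ∃ i : ℤ, Even i ∧ x ∈ Z₀ i}),
      (∀ j : Fin k, (a j : A.carrier) - (abar j : A.carrier) ∈
        Ideal.span {x : A.carrier | ∃ i : ℤ, Odd i ∧ x ∈ Z₀ i}) →
      IsRegularSeq abar := by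
  obtain ⟨ι, lo, deg, g, hg1, hV, hLI, hspan⟩ := A.free
  have hg := aux_g_indep lo deg g hLI
  obtain ⟨⟨N, hN⟩, hfinH⟩ := hell
  have hfin := aux_finite A N hN deg g hg1 hg
  have := Fintype.ofFinite ι
  let : Algebra (MvPolynomial {x : ι // Even (deg x)} ℚ) A.carrier :=
    RingHom.toAlgebra' ((Subalgebra.center ℚ A.carrier).val.toRingHom.comp
      (auxCenterMap A deg g hg1).toRingHom) (by
        intro p z
        exact ((Subalgebra.mem_center_iff.1 (auxCenterMap A deg g hg1 p).2) z).symm)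
  have htower : IsScalarTower ℚ (MvPolynomial {x : ι // Even (deg x)} ℚ) A.carrier := by
    apply IsScalarTower.of_algebraMap_eq
    intro q
    show _ = ((auxCenterMap A deg g hg1 (algebraMap ℚ _ q) : Subalgebra.center ℚ A.carrier)
      : A.carrier)
    rw [AlgHom.commutes]
    rfl
  have hX : ∀ x : {x : ι // Even (deg x)},
      algebraMap (MvPolynomial {x : ι // Even (deg x)} ℚ) A.carrier (MvPolynomial.X x) = g x := by
    intro x
    show ((auxCenterMap A deg g hg1 (MvPolynomial.X x) : Subalgebra.center ℚ A.carrier)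
      : A.carrier) = g x
    rw [auxCenterMap, MvPolynomial.aeval_X]
  obtain ⟨h1, h2⟩ := aux_main A hfinH lo deg g hX hg1 hV hLI hspan Z₀ Z₁ hsplit₁ hsplit₂ hZ₁odd
    hdZ₀ k b degb hb hbLI hbspan a ha hreg
  exact ⟨h1.trans (aux_finsum A deg g hV hg Z₀ Z₁ hsplit₂ hZ₁odd).symm, h2⟩
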